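/- arXiv:1205.0514 — 2 statements merged into one kernel-verified Lean document; each statement's English description precedes it below -/
import Mathlib

section
/- Let r₀ > 0 and let v be a harmonic field on the ball B_{r₀} ⊆ ℝ³ that does not vanish identically. Then h(r) = ∫_{∂B_r} |v|² dσ is strictly positive for every r ∈ (0, r₀), and the frequency function N(r) = r·H(r)/h(r), with H(r) = ∫_{B_r} |Dv|² dx, is nondecreasing on (0, r₀). -/
open MeasureTheory Metric
open scoped RealInnerProductSpace

noncomputable section

abbrev E3 := EuclideanSpace ℝ (Fin 3)

/-- A harmonic field on an open set `Ω ⊆ ℝ³`: a smooth map whose total derivative is at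
every point of `Ω` a symmetric, trace-free endomorphism of `ℝ³`. -/
def IsHarmonicField (Ω : Set E3) (v : E3 → E3) : Prop :=
  ContDiffOn ℝ (⊤ : ℕ∞) v Ω ∧
    ∀ x ∈ Ω,
      (∀ u w : E3, ⟪fderiv ℝ v x u, w⟫ = ⟪fderiv ℝ v x w, u⟫) ∧
      LinearMap.trace ℝ E3 (fderiv ℝ v x).toLinearMap = 0

/-- The square of the Frobenius norm of the total derivative of `v` at `x`. -/
def frobSq (v : E3 → E3) (x : E3) : ℝ :=
  ∑ i : Fin 3, ‖fderiv ℝ v x (EuclideanSpace.single i 1)‖ ^ 2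

open Filter Topology in
lemma unique_inv (μ ρ : Measure E3) [IsFiniteMeasure μ] [IsFiniteMeasure ρ]
    (hμ : μ (sphere 0 1)ᶜ = 0) (hρ : ρ (sphere 0 1)ᶜ = 0)
    (iμ : ∀ L : E3 ≃ₗᵢ[ℝ] E3, μ.map L = μ) (iρ : ∀ L : E3 ≃ₗᵢ[ℝ] E3, ρ.map L = ρ)
    (hρ0 : ρ ≠ 0) : ∃ c : ENNReal, c ≠ ⊤ ∧ μ = c • ρ := by
  have key : ∀ (α τ : Measure E3) [IsFiniteMeasure α] [IsFiniteMeasure τ],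
      τ (sphere 0 1)ᶜ = 0 → (∀ L : E3 ≃ₗᵢ[ℝ] E3, α.map L = α) →
      (∀ L : E3 ≃ₗᵢ[ℝ] E3, τ.map L = τ) → τ ≠ 0 → α ≪ τ →
      ∃ c : ENNReal, c ≠ ⊤ ∧ α = c • τ := by
    intro α τ _ _ hτ iα iτ hτ0 hac
    have ball_eq : ∀ (β : Measure E3), (∀ L : E3 ≃ₗᵢ[ℝ] E3, β.map L = β) →
        ∀ x ∈ sphere (0 : E3) 1, ∀ y ∈ sphere (0 : E3) 1, ∀ r,
        β (closedBall x r) = β (closedBall y r) := by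
      intro β iβ x hx y hy r
      have hxy : ‖x‖ = ‖y‖ := by
        rw [mem_sphere_zero_iff_norm] at hx hy; rw [hx, hy]
      have hR := Submodule.reflection_sub hxy
      set R := (ℝ ∙ (x - y))ᗮ.reflection
      have h1 := iβ R
      calc β (closedBall x r) = β (R ⁻¹' closedBall y r) := by
            rw [← hR, R.preimage_closedBall]; simp
        _ = (β.map R) (closedBall y r) := by
            rw [Measure.map_apply R.continuous.measurable measurableSet_closedBall]
        _ = _ := by rw [h1]
    have h1 : ∀ᵐ x ∂τ, x ∈ sphere (0 : E3) 1 := hτ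
    have h2 := Besicovitch.ae_tendsto_rnDeriv α τ
    have h12 := h1.and h2
    have : (ae τ).NeBot := ae_neBot.2 hτ0
    obtain ⟨x0, hx0, hl0⟩ := h12.exists
    have h3 : α.rnDeriv τ =ᵐ[τ] fun _ => α.rnDeriv τ x0 := by
      filter_upwards [h12] with x hx
      refine tendsto_nhds_unique hx.2 (hl0.congr fun r => ?_)
      rw [ball_eq α iα x0 hx0 x hx.1, ball_eq τ iτ x0 hx0 x hx.1]
    have h4 : α = α.rnDeriv τ x0 • τ := by
      have hdec : α.HaveLebesgueDecomposition τ :=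
        Measure.haveLebesgueDecomposition_of_sigmaFinite α τ
      have h5 := Measure.withDensity_rnDeriv_eq α τ hac
      rw [withDensity_congr_ae h3, withDensity_const] at h5
      exact h5.symm
    refine ⟨_, ?_, h4⟩
    intro htop
    rw [htop] at h4
    have h5 : α Set.univ = ⊤ := by
      rw [h4]
      simp [ENNReal.top_mul, hτ0]
    exact measure_ne_top _ _ h5
  have hτ0 : μ + ρ ≠ 0 := by
    intro h
    apply hρ0
    have : ρ ≤ μ + ρ := Measure.le_add_left le_rfl
    rw [h] at this
    exact le_antisymm this bot_le
  have iτ : ∀ L : E3 ≃ₗᵢ[ℝ] E3, (μ + ρ).map L = μ + ρ := by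
    intro L
    rw [Measure.map_add _ _ L.continuous.measurable, iμ, iρ]
  have hτ : (μ + ρ) (sphere 0 1)ᶜ = 0 := by simp [hμ, hρ]
  obtain ⟨c, hc, h1⟩ := key μ (μ + ρ) hτ iμ iτ hτ0 (Measure.le_add_right le_rfl).absolutelyContinuous
  obtain ⟨d, hd, h2⟩ := key ρ (μ + ρ) hτ iρ iτ hτ0 (Measure.le_add_left le_rfl).absolutelyContinuous
  have hd0 : d ≠ 0 := by
    rintro rfl
    exact hρ0 (by simpa using h2)
  refine ⟨c * d⁻¹, ENNReal.mul_ne_top hc (by simpa using hd0), ?_⟩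
  conv_rhs => rw [h2]
  rw [smul_smul, mul_assoc, ENNReal.inv_mul_cancel hd0 hd, mul_one]
  exact h1

def sig : Measure (sphere (0 : E3) 1) := (volume : Measure E3).toSphere

instance : IsFiniteMeasure sig := by unfold sig; infer_instance

open scoped Pointwise in
lemma sig_inv (L : E3 ≃ₗᵢ[ℝ] E3) :
    (sig.map Subtype.val).map L = sig.map (Subtype.val : sphere (0 : E3) 1 → E3) := by
  have form : ∀ s : Set E3, MeasurableSet s → sig.map (Subtype.val : sphere (0 : E3) 1 → E3) s
      = Module.finrank ℝ E3 * volume (Set.Ioo (0:ℝ) 1 • (sphere (0 : E3) 1 ∩ s)) := by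
    intro s hs
    rw [Measure.map_apply measurable_subtype_coe hs, sig,
      Measure.toSphere_apply' _ (measurable_subtype_coe hs), Subtype.image_preimage_coe]
  ext s hs
  have hLm := L.continuous.measurable
  rw [Measure.map_apply hLm hs, form _ (hLm hs), form _ hs]
  congr 1
  rw [← MeasurePreserving.measure_preimage_equiv (f := L.toMeasurableEquiv)
    (L.measurePreserving) (Set.Ioo (0:ℝ) 1 • (sphere (0 : E3) 1 ∩ s))]
  change _ = volume (L ⁻¹' _)
  congr 1
  ext x
  simp only [Set.mem_smul, Set.mem_preimage, Set.mem_inter_iff, mem_sphere_zero_iff_norm]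
  constructor
  · rintro ⟨t, ht, y, ⟨hy, hys⟩, rfl⟩
    exact ⟨t, ht, L y, ⟨by simpa using hy, hys⟩, by simp⟩
  · rintro ⟨t, ht, y, ⟨hy, hys⟩, h⟩
    refine ⟨t, ht, L.symm y, ⟨by simpa using hy, by simpa using hys⟩, ?_⟩
    apply L.injective
    simpa using h

lemma muH_sphere_lt_top : μH[2] (sphere (0 : E3) 1) < ⊤ := by
  let f : ℝ × ℝ → E3 := fun p =>
    !₂[Real.sin p.1 * Real.cos p.2, Real.sin p.1 * Real.sin p.2, Real.cos p.1]
  have hf : ContDiff ℝ 1 f := by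
    rw [contDiff_euclidean]
    intro i
    fin_cases i <;> simp [f] <;> fun_prop
  let K : Set (ℝ × ℝ) := Set.Icc (0, -Real.pi) (Real.pi, Real.pi)
  have hK : IsCompact K := isCompact_Icc
  obtain ⟨C, hC⟩ := hf.contDiffOn.exists_lipschitzOnWith (s := K) (by simp) (convex_Icc _ _) hK
  have hsub : sphere (0 : E3) 1 ⊆ f '' K := by
    intro x hx
    rw [mem_sphere_zero_iff_norm] at hx
    have hx2 : x 0 ^ 2 + x 1 ^ 2 + x 2 ^ 2 = 1 := by
      have := EuclideanSpace.norm_sq_eq x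
      rw [hx] at this
      simp [Fin.sum_univ_three] at this
      linarith
    have h21 : x 2 ≤ 1 := by nlinarith
    have h22 : -1 ≤ x 2 := by nlinarith
    let z : ℂ := ⟨x 0, x 1⟩
    have hz : Real.sin (Real.arccos (x 2)) = ‖z‖ := by
      rw [Real.sin_arccos, Complex.norm_def, Complex.normSq_mk]
      congr 1; linarith
    refine ⟨(Real.arccos (x 2), Complex.arg z), ⟨⟨Real.arccos_nonneg _, (Complex.neg_pi_lt_arg z).le⟩,
      ⟨Real.arccos_le_pi _, Complex.arg_le_pi z⟩⟩, ?_⟩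
    ext i
    fin_cases i
    · simp [f, hz, Complex.norm_mul_cos_arg, z]
    · simp [f, hz, Complex.norm_mul_sin_arg, z]
    · simp [f, Real.cos_arccos h22 h21]
  calc μH[2] (sphere (0 : E3) 1) ≤ μH[2] (f '' K) := measure_mono hsub
    _ ≤ (C : ENNReal) ^ (2:ℝ) * μH[2] K := hC.hausdorffMeasure_image_le (by norm_num)
    _ < ⊤ := by
      rw [hausdorffMeasure_prod_real]
      exact ENNReal.mul_lt_top (by simp) hK.measure_lt_top

lemma muH_sphere_pos : μH[2] (sphere (0 : E3) 1) ≠ 0 := by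
  let f : E3 → ℝ × ℝ := fun x => (x 0, x 1)
  have hf : LipschitzWith 1 f := by
    apply LipschitzWith.of_dist_le_mul
    intro x y
    have h : ∀ i, dist (x i) (y i) ≤ dist x y := fun i => by
      rw [dist_eq_norm, dist_eq_norm]; simpa using PiLp.norm_apply_le (x - y) i
    simp [f, Prod.dist_eq, h]
  intro h0
  have h1 := hf.hausdorffMeasure_image_le (d := 2) (by norm_num) (sphere (0 : E3) 1)
  rw [h0, hausdorffMeasure_prod_real] at h1
  have hsub : ball (0 : ℝ × ℝ) (1/2) ⊆ f '' sphere (0 : E3) 1 := by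
    rintro ⟨a, b⟩ hab
    simp [Prod.norm_def] at hab
    obtain ⟨ha, hb⟩ := hab
    rw [abs_lt] at ha hb
    refine ⟨!₂[a, b, Real.sqrt (1 - a^2 - b^2)], ?_, by simp [f]⟩
    rw [mem_sphere_zero_iff_norm, EuclideanSpace.norm_eq]
    simp [Fin.sum_univ_three]
    rw [Real.sq_sqrt (by nlinarith)]
    ring
  have h2 := measure_mono (μ := volume) hsub
  have h3 : 0 < volume (ball (0 : ℝ × ℝ) (1/2)) := measure_ball_pos _ _ (by norm_num)
  simp at h1
  rw [h1] at h2
  exact absurd h2 (not_le.2 h3)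

lemma muH_eq : ∃ c : ENNReal, c ≠ ⊤ ∧ c ≠ 0 ∧
    (μH[2] : Measure E3).restrict (sphere 0 1) = c • sig.map Subtype.val := by
  have : IsFiniteMeasure ((μH[2] : Measure E3).restrict (sphere 0 1)) :=
    ⟨by simpa using muH_sphere_lt_top⟩
  have : IsFiniteMeasure (sig.map (Subtype.val : sphere (0:E3) 1 → E3)) := inferInstance
  have k1 : (μH[2] : Measure E3).restrict (sphere 0 1) (sphere 0 1)ᶜ = 0 := by
    rw [Measure.restrict_apply isClosed_sphere.measurableSet.compl]; simp
  have k2 : sig.map (Subtype.val : sphere (0:E3) 1 → E3) (sphere 0 1)ᶜ = 0 := by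
    rw [Measure.map_apply measurable_subtype_coe isClosed_sphere.measurableSet.compl]; simp
  have k3 : ∀ L : E3 ≃ₗᵢ[ℝ] E3, ((μH[2] : Measure E3).restrict (sphere 0 1)).map L
      = (μH[2] : Measure E3).restrict (sphere 0 1) := by
    intro L
    have h1 := (L.toIsometryEquiv.measurePreserving_hausdorffMeasure 2).restrict_preimage
      (isClosed_sphere (x := (0:E3)) (ε := 1)).measurableSet
    have h2 : L.toIsometryEquiv ⁻¹' sphere (0:E3) 1 = sphere 0 1 := by
      ext x; simp
    rw [h2] at h1
    exact h1.map_eq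
  have k4 : sig.map (Subtype.val : sphere (0:E3) 1 → E3) ≠ 0 := by
    intro h
    have := congrArg (fun m => m Set.univ) h
    simp [Measure.map_apply measurable_subtype_coe, sig] at this
    linarith [Real.pi_pos]
  obtain ⟨c, hc, h⟩ := unique_inv _ _ k1 k2 k3 sig_inv k4
  refine ⟨c, hc, ?_, h⟩
  rintro rfl
  have := congrArg (fun m => m Set.univ) h
  simp at this
  exact muH_sphere_pos this

def M (f : E3 → ℝ) (r : ℝ) : ℝ := ∫ ω : sphere (0 : E3) 1, f (r • (ω : E3)) ∂sig

lemma muH_integral : ∃ c : ℝ, 0 < c ∧ ∀ (f : E3 → ℝ) (r : ℝ), 0 < r →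
    ∫ x in sphere (0 : E3) r, f x ∂μH[2] = c * r ^ 2 * M f r := by
  obtain ⟨c, hc, hc0, h⟩ := muH_eq
  refine ⟨c.toReal, ENNReal.toReal_pos hc0 hc, fun f r hr => ?_⟩
  have hM : ∫ x in sphere (0 : E3) 1, f (r • x) ∂μH[2] = c.toReal * M f r := by
    rw [h, integral_smul_measure,
      (MeasurableEmbedding.subtype_coe isClosed_sphere.measurableSet).integral_map]
    rfl
  have h2 := MeasureTheory.map_homothety_hausdorffMeasure (d := 2) (by norm_num) (0 : E3) hr.ne'
  have hfun : (AffineMap.homothety (0:E3) r : E3 → E3) = fun x => r • x := by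
    ext x; simp [AffineMap.homothety_apply]
  have hemb : MeasurableEmbedding (fun x : E3 => r • x) :=
    (Homeomorph.smulOfNeZero r hr.ne').measurableEmbedding
  rw [hfun] at h2
  have h3 := hemb.setIntegral_map (μ := μH[2]) f (sphere (0:E3) r)
  have hpre : (fun x : E3 => r • x) ⁻¹' sphere (0:E3) r = sphere 0 1 := by
    ext x
    simp [norm_smul, abs_of_pos hr, hr.ne']
  rw [h2, hpre, hM, Measure.restrict_smul, integral_smul_nnreal_measure] at h3
  rw [mul_right_comm, ← h3]
  rw [NNReal.smul_def]
  simp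
  field_simp
lemma polar {r₀ : ℝ} {f : E3 → ℝ} (hf : ContinuousOn f (ball 0 r₀)) {r : ℝ} (hr : 0 < r)
    (hr0 : r < r₀) : ∫ x in ball (0 : E3) r, f x = ∫ s in (0:ℝ)..r, s ^ 2 * M f s := by
  set g : E3 → ℝ := (ball (0 : E3) r).indicator f with hg
  have hint : Integrable g := by
    rw [hg, integrable_indicator_iff measurableSet_ball]
    have : IntegrableOn f (closedBall (0 : E3) r) :=
      (hf.mono (closedBall_subset_ball hr0)).integrableOn_compact (isCompact_closedBall _ _)
    exact this.mono_set ball_subset_closedBall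
  have hmp := (volume : Measure E3).measurePreserving_homeomorphUnitSphereProd
  have hdim : Module.finrank ℝ E3 - 1 = 2 := by simp
  rw [hdim] at hmp
  set G : sphere (0 : E3) 1 × Set.Ioi (0:ℝ) → ℝ := fun p => g ((p.2 : ℝ) • (p.1 : E3)) with hG
  have hGc : ∀ x : ({0}ᶜ : Set E3), G (homeomorphUnitSphereProd E3 x) = g x.1 := by
    intro x
    have hx : ‖(x : E3)‖ ≠ 0 := norm_ne_zero_iff.2 x.2
    simp [hG, smul_smul, hx]
  have hGint : Integrable G (sig.prod (Measure.volumeIoiPow 2)) := by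
    rw [sig, ← hmp.integrable_comp_emb (Homeomorph.measurableEmbedding _)]
    have : (G ∘ homeomorphUnitSphereProd E3) = g ∘ Subtype.val := by
      ext x; exact hGc x
    rw [this, ← integrableOn_iff_comap_subtypeVal (measurableSet_singleton _).compl]
    exact hint.integrableOn
  calc ∫ x in ball (0 : E3) r, f x = ∫ x, g x := (integral_indicator measurableSet_ball).symm
    _ = ∫ x : ({(0)}ᶜ : Set E3), g x ∂(volume.comap Subtype.val) := by
      rw [integral_subtype_comap (measurableSet_singleton _).compl g, restrict_compl_singleton]
    _ = ∫ p, G p ∂(sig.prod (Measure.volumeIoiPow 2)) := by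
      rw [sig, ← hmp.integral_comp (Homeomorph.measurableEmbedding _)]
      exact integral_congr_ae (Filter.Eventually.of_forall fun x => (hGc x).symm)
    _ = ∫ s : Set.Ioi (0:ℝ), M g s ∂(Measure.volumeIoiPow 2) := integral_prod_symm _ hGint
    _ = ∫ s in Set.Ioi (0:ℝ), s ^ 2 * M g s := by
      simp only [Measure.volumeIoiPow, ENNReal.ofReal]
      rw [integral_withDensity_eq_integral_smul,
        integral_subtype_comap measurableSet_Ioi fun a ↦ Real.toNNReal (a ^ 2) • M g a,
        setIntegral_congr_fun measurableSet_Ioi fun x hx ↦ ?_]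
      · rw [NNReal.smul_def, Real.coe_toNNReal _ (pow_nonneg (le_of_lt hx) _), smul_eq_mul]
      · exact (measurable_subtype_coe.pow_const _).real_toNNReal
    _ = ∫ s in Set.Ioi (0:ℝ), (Set.Iio r).indicator (fun s => s ^ 2 * M f s) s := by
      refine setIntegral_congr_fun measurableSet_Ioi fun s hs => ?_
      have hs : 0 < s := hs
      have hn : ∀ ω : sphere (0:E3) 1, ‖s • (ω : E3)‖ = s := fun ω => by
        simp [norm_smul, abs_of_pos hs]
      by_cases h : s < r
      · have : M g s = M f s := by
          unfold M
          congr 1; ext ω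
          rw [hg, Set.indicator_of_mem]
          rw [mem_ball_zero_iff, hn]; exact h
        simp [h, this]
      · have : M g s = 0 := by
          unfold M
          rw [show (fun ω : sphere (0:E3) 1 => g (s • (ω : E3))) = fun _ => 0 from ?_]
          · simp
          ext ω
          rw [hg, Set.indicator_of_notMem]
          rw [mem_ball_zero_iff, hn]; exact h
        simp [h, this]
    _ = ∫ s in (0:ℝ)..r, s ^ 2 * M f s := by
      rw [setIntegral_indicator measurableSet_Iio, Set.Ioi_inter_Iio,
        intervalIntegral.integral_of_le hr.le, integral_Ioc_eq_integral_Ioo]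

lemma deriv_param {f f' : ℝ → sphere (0:E3) 1 → ℝ} {a b t : ℝ} (ht : t ∈ Set.Ioo a b)
    (hf : ∀ s ∈ Set.Ioo a b, Continuous (f s))
    (hd : ∀ s ∈ Set.Ioo a b, ∀ ω, HasDerivAt (fun s => f s ω) (f' s ω) s)
    (hc : ContinuousOn (fun p : ℝ × sphere (0:E3) 1 => f' p.1 p.2) (Set.Ioo a b ×ˢ Set.univ)) :
    HasDerivAt (fun s => ∫ ω, f s ω ∂sig) (∫ ω, f' t ω ∂sig) t := by
  obtain ⟨a', ha1, ha2⟩ := exists_between ht.1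
  obtain ⟨b', hb1, hb2⟩ := exists_between ht.2
  have hsub : Set.Icc a' b' ⊆ Set.Ioo a b := fun s hs => ⟨by linarith [hs.1], by linarith [hs.2]⟩
  have hK : IsCompact (Set.Icc a' b' ×ˢ (Set.univ : Set (sphere (0:E3) 1))) :=
    isCompact_Icc.prod isCompact_univ
  obtain ⟨C, hC⟩ := hK.exists_bound_of_continuousOn (hc.mono (Set.prod_mono hsub le_rfl))
  have hmem : Set.Icc a' b' ∈ nhds t := Icc_mem_nhds ha2 hb1
  refine (hasDerivAt_integral_of_dominated_loc_of_deriv_le (bound := fun _ => C) hmem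
    ?_ ?_ ?_ ?_ ?_ ?_).2
  · filter_upwards [hmem] with s hs
    exact (hf s (hsub hs)).aestronglyMeasurable
  · exact (hf t ht).integrable_of_hasCompactSupport (HasCompactSupport.of_compactSpace _)
  · have : Continuous (f' t) := by
      rw [← continuousOn_univ]
      exact hc.comp (f := fun ω => (t, ω)) (by fun_prop) (fun ω _ => ⟨ht, trivial⟩)
    exact this.aestronglyMeasurable
  · exact Filter.Eventually.of_forall fun ω s hs => hC (s, ω) ⟨hs, trivial⟩
  · exact integrable_const _
  · exact Filter.Eventually.of_forall fun ω s hs => hd s (hsub hs) ω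

lemma smul_mem_ball' {r₀ s : ℝ} (hs : s ∈ Set.Ioo (-r₀) r₀) {x : E3} (hx : ‖x‖ = 1) :
    s • x ∈ ball (0:E3) r₀ := by
  rw [mem_ball_zero_iff, norm_smul, hx, mul_one, Real.norm_eq_abs, abs_lt]
  exact hs

lemma M_cont {r₀ : ℝ} {g : E3 → ℝ} (hg : ContinuousOn g (ball 0 r₀)) {r : ℝ}
    (hr : r ∈ Set.Ioo (-r₀) r₀) : Continuous (fun ω : sphere (0:E3) 1 => g (r • (ω:E3))) := by
  rw [← continuousOn_univ]
  exact hg.comp (by fun_prop) (fun ω _ => smul_mem_ball' hr (by simp))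

lemma M_int {r₀ : ℝ} {g : E3 → ℝ} (hg : ContinuousOn g (ball 0 r₀)) {r : ℝ}
    (hr : r ∈ Set.Ioo (-r₀) r₀) :
    Integrable (fun ω : sphere (0:E3) 1 => g (r • (ω:E3))) sig :=
  (M_cont hg hr).integrable_of_hasCompactSupport (HasCompactSupport.of_compactSpace _)

lemma M_deriv {r₀ : ℝ} {g : E3 → ℝ} (hg : ContDiffOn ℝ 1 g (ball 0 r₀)) {r : ℝ}
    (hr : r ∈ Set.Ioo (-r₀) r₀) :
    HasDerivAt (M g) (∫ ω : sphere (0:E3) 1, fderiv ℝ g (r • (ω:E3)) ω ∂sig) r := by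
  have hfd : ContinuousOn (fderiv ℝ g) (ball 0 r₀) :=
    hg.continuousOn_fderiv_of_isOpen isOpen_ball le_rfl
  refine deriv_param (f := fun s ω => g (s • (ω:E3)))
    (f' := fun s ω => fderiv ℝ g (s • (ω:E3)) ω) hr ?_ ?_ ?_
  · intro s hs
    exact M_cont hg.continuousOn hs
  · intro s hs ω
    have h1 := ((hg.differentiableOn one_ne_zero).differentiableAt
      (isOpen_ball.mem_nhds (smul_mem_ball' hs (x := (ω:E3)) (by simp)))).hasFDerivAt
    have h2 : HasDerivAt (fun s : ℝ => s • (ω:E3)) (ω:E3) s := by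
      simpa using (hasDerivAt_id s).smul_const (ω:E3)
    exact h1.comp_hasDerivAt s h2
  · refine ContinuousOn.clm_apply (hfd.comp (by fun_prop) ?_) (by fun_prop)
    rintro ⟨s, ω⟩ ⟨hs, -⟩
    exact smul_mem_ball' hs (by simp)

lemma M_continuousAt {r₀ : ℝ} {g : E3 → ℝ} (hg : ContDiffOn ℝ 1 g (ball 0 r₀)) {r : ℝ}
    (hr : r ∈ Set.Ioo (-r₀) r₀) : ContinuousAt (M g) r := (M_deriv hg hr).continuousAt

/-- standard basis vector -/
abbrev ee (i : Fin 3) : E3 := EuclideanSpace.single i 1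

/-- partial derivative -/
def pd (i : Fin 3) (g : E3 → ℝ) (x : E3) : ℝ := fderiv ℝ g x (ee i)

def rotLin (i j : Fin 3) (θ : ℝ) : E3 →ₗ[ℝ] E3 where
  toFun x := x + ((Real.cos θ - 1) * x i - Real.sin θ * x j) • ee i
    + ((Real.cos θ - 1) * x j + Real.sin θ * x i) • ee j
  map_add' x y := by
    ext k; simp; split_ifs <;> ring
  map_smul' c x := by
    ext k; simp; split_ifs <;> ring

lemma rotLin_norm {i j : Fin 3} (hij : i ≠ j) (θ : ℝ) (x : E3) : ‖rotLin i j θ x‖ = ‖x‖ := by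
  rw [EuclideanSpace.norm_eq, EuclideanSpace.norm_eq]
  congr 1
  have h := Real.sin_sq_add_cos_sq θ
  simp only [Real.norm_eq_abs, sq_abs, Fin.sum_univ_three]
  fin_cases i <;> fin_cases j <;>
    first
    | exact absurd rfl hij
    | (simp [rotLin]
       first
       | linear_combination (x 0 ^ 2 + x 1 ^ 2) * h
       | linear_combination (x 0 ^ 2 + x 2 ^ 2) * h
       | linear_combination (x 1 ^ 2 + x 2 ^ 2) * h)

def rot {i j : Fin 3} (hij : i ≠ j) (θ : ℝ) : E3 ≃ₗᵢ[ℝ] E3 :=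
  LinearIsometry.toLinearIsometryEquiv ⟨rotLin i j θ, rotLin_norm hij θ⟩ rfl

lemma rot_apply {i j : Fin 3} (hij : i ≠ j) (θ : ℝ) (x : E3) : rot hij θ x =
    x + ((Real.cos θ - 1) * x i - Real.sin θ * x j) • ee i
    + ((Real.cos θ - 1) * x j + Real.sin θ * x i) • ee j := rfl

lemma M_rot_inv (g : E3 → ℝ) (L : E3 ≃ₗᵢ[ℝ] E3) :
    ∫ ω : sphere (0:E3) 1, g (L ω) ∂sig = ∫ ω : sphere (0:E3) 1, g ω ∂sig := by
  have he := MeasurableEmbedding.subtype_coe (isClosed_sphere (x := (0:E3)) (ε := 1)).measurableSet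
  rw [← he.integral_map (μ := sig) (fun x => g (L x)), ← he.integral_map (μ := sig) g]
  conv_rhs => rw [← sig_inv L]
  have hL : MeasurableEmbedding (L : E3 → E3) := L.toHomeomorph.measurableEmbedding
  rw [hL.integral_map]

lemma M_rot {r₀ : ℝ} {g : E3 → ℝ} (hg : ContDiffOn ℝ 1 g (ball 0 r₀)) {r : ℝ}
    (hr : r ∈ Set.Ioo (-r₀) r₀) {i j : Fin 3} (hij : i ≠ j) :
    M (fun x => x i * pd j g x - x j * pd i g x) r = 0 := by
  have hfd : ContinuousOn (fderiv ℝ g) (ball 0 r₀) :=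
    hg.continuousOn_fderiv_of_isOpen isOpen_ball le_rfl
  have hmem : ∀ θ (ω : sphere (0:E3) 1), r • rot hij θ ω ∈ ball (0:E3) r₀ :=
    fun θ ω => smul_mem_ball' hr (by simp)
  have hcont : Continuous fun p : ℝ × sphere (0:E3) 1 => r • rot hij p.1 (p.2:E3) := by
    simp only [rot_apply]
    fun_prop
  have key := deriv_param (a := -1) (b := 1) (t := 0) (f := fun θ ω => g (r • rot hij θ ω))
    (f' := fun θ ω => fderiv ℝ g (r • rot hij θ ω)
      (r • ((-Real.sin θ * (ω:E3) i - Real.cos θ * (ω:E3) j) • ee i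
    + (-Real.sin θ * (ω:E3) j + Real.cos θ * (ω:E3) i) • ee j))) (by norm_num) ?_ ?_ ?_
  · have hconst : (fun θ => ∫ ω : sphere (0:E3) 1, g (r • rot hij θ ω) ∂sig) =
        fun _ => M g r := by
      ext θ
      exact M_rot_inv (fun x => g (r • x)) (rot hij θ)
    rw [hconst] at key
    have h0 := key.unique (hasDerivAt_const _ _)
    rw [← h0]
    unfold M
    congr 1
    ext ω
    have : rot hij 0 (ω:E3) = ω := by simp [rot_apply]
    rw [this]
    simp [pd]
    ring
  · intro s hs
    rw [← continuousOn_univ]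
    refine hg.continuousOn.comp ?_ (fun ω _ => hmem s ω)
    exact (hcont.comp (by fun_prop : Continuous fun ω : sphere (0:E3) 1 => (s, ω))).continuousOn
  · intro s hs ω
    have h1 := ((hg.differentiableOn one_ne_zero).differentiableAt
      (isOpen_ball.mem_nhds (hmem s ω))).hasFDerivAt
    refine h1.comp_hasDerivAt s ?_
    simp only [rot_apply]
    refine HasDerivAt.const_smul r ?_
    have hA : HasDerivAt (fun θ => (Real.cos θ - 1) * (ω:E3) i - Real.sin θ * (ω:E3) j)
        (-Real.sin s * (ω:E3) i - Real.cos s * (ω:E3) j) s :=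
      (((Real.hasDerivAt_cos s).sub_const 1).mul_const _).sub ((Real.hasDerivAt_sin s).mul_const _)
    have hB : HasDerivAt (fun θ => (Real.cos θ - 1) * (ω:E3) j + Real.sin θ * (ω:E3) i)
        (-Real.sin s * (ω:E3) j + Real.cos s * (ω:E3) i) s :=
      (((Real.hasDerivAt_cos s).sub_const 1).mul_const _).add ((Real.hasDerivAt_sin s).mul_const _)
    exact ((hA.smul_const (ee i)).const_add (ω:E3)).add (hB.smul_const (ee j))
  · refine ContinuousOn.clm_apply (hfd.comp hcont.continuousOn ?_) (by fun_prop)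
    rintro ⟨s, ω⟩ -
    exact hmem s ω
lemma ode_part {r₀ : ℝ} {A P W : ℝ → ℝ}
    (hA : ∀ r ∈ Set.Ioo 0 r₀, HasDerivAt A (2 * P r / r) r)
    (hP : ∀ r ∈ Set.Ioo 0 r₀, HasDerivAt P (2 * W r / r) r)
    (hA0 : ∀ r ∈ Set.Ioo 0 r₀, 0 ≤ A r) (hP0 : ∀ r ∈ Set.Ioo 0 r₀, 0 ≤ P r)
    (hCS : ∀ r ∈ Set.Ioo 0 r₀, 0 < A r → P r ^ 2 ≤ A r * W r)
    (hne : ∃ r ∈ Set.Ioo 0 r₀, A r ≠ 0) :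
    (∀ r ∈ Set.Ioo 0 r₀, 0 < A r) ∧ MonotoneOn (fun r => P r / A r) (Set.Ioo 0 r₀) := by
  have mono : ∀ s ⊆ Set.Ioo 0 r₀, Convex ℝ s → (∀ r ∈ s, 0 < A r) →
      MonotoneOn (fun r => P r / A r) s := by
    intro s hs hconv hpos
    have hd : ∀ r ∈ s, HasDerivAt (fun r => P r / A r)
        ((2 * W r / r * A r - P r * (2 * P r / r)) / A r ^ 2) r :=
      fun r hr => (hP r (hs hr)).div (hA r (hs hr)) (hpos r hr).ne'
    refine monotoneOn_of_deriv_nonneg hconv (fun r hr => (hd r hr).continuousAt.continuousWithinAt)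
      (fun r hr => (hd r (interior_subset hr)).differentiableAt.differentiableWithinAt) ?_
    intro r hr
    have hr := interior_subset hr
    rw [(hd r hr).deriv]
    have h1 := hCS r (hs hr) (hpos r hr)
    have hr0 : 0 < r := (hs hr).1
    have : 2 * W r / r * A r - P r * (2 * P r / r) = 2 * (A r * W r - P r ^ 2) / r := by
      field_simp
    rw [this]
    apply div_nonneg (div_nonneg (by linarith) hr0.le) (sq_nonneg _)
  have pos : ∀ r ∈ Set.Ioo 0 r₀, 0 < A r := by
    by_contra hcon
    push Not at hcon
    obtain ⟨r1, hr1, hAr1⟩ := hcon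
    have hAr1 : A r1 = 0 := le_antisymm hAr1 (hA0 r1 hr1)
    obtain ⟨r2, hr2, hAr2⟩ := hne
    have hAr2 : 0 < A r2 := lt_of_le_of_ne (hA0 r2 hr2) (Ne.symm hAr2)
    have hmono : MonotoneOn A (Set.Ioo 0 r₀) := by
      refine monotoneOn_of_deriv_nonneg (convex_Ioo _ _)
        (fun r hr => (hA r hr).continuousAt.continuousWithinAt)
        (fun r hr => (hA r (interior_subset hr)).differentiableAt.differentiableWithinAt) ?_
      intro r hr
      have hr := interior_subset hr
      rw [(hA r hr).deriv]
      have := hP0 r hr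
      have := hr.1
      positivity
    have h12 : r1 < r2 := by
      by_contra h
      have := hmono hr2 hr1 (not_lt.1 h)
      linarith
    have hsub : Set.Icc r1 r2 ⊆ Set.Ioo 0 r₀ := fun x hx =>
      ⟨lt_of_lt_of_le hr1.1 hx.1, lt_of_le_of_lt hx.2 hr2.2⟩
    have hcA : ContinuousOn A (Set.Icc r1 r2) :=
      fun r hr => (hA r (hsub hr)).continuousAt.continuousWithinAt
    set Z := Set.Icc r1 r2 ∩ A ⁻¹' {0} with hZ
    have hZc : IsCompact Z := isCompact_Icc.of_isClosed_subset
      (hcA.preimage_isClosed_of_isClosed isClosed_Icc isClosed_singleton) Set.inter_subset_left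
    have hZn : Z.Nonempty := ⟨r1, ⟨le_rfl, h12.le⟩, hAr1⟩
    have haZ := hZc.sSup_mem hZn
    set a := sSup Z
    have ha0 : 0 < a := (hsub haZ.1).1
    have haA : A a = 0 := haZ.2
    have hsub2 : Set.Icc a r2 ⊆ Set.Ioo 0 r₀ := fun x hx => hsub ⟨haZ.1.1.trans hx.1, hx.2⟩
    have ha2 : a < r2 := lt_of_le_of_ne haZ.1.2 (fun h => by rw [h] at haA; linarith)
    have hposa : ∀ r ∈ Set.Ioc a r2, 0 < A r := by
      intro r hr
      refine lt_of_le_of_ne (hA0 r (hsub2 ⟨hr.1.le, hr.2⟩)) (fun h => ?_)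
      have : r ≤ a := le_csSup hZc.bddAbove ⟨⟨haZ.1.1.trans hr.1.le, hr.2⟩, h.symm⟩
      linarith [hr.1]
    have hm := mono (Set.Ioc a r2) (fun x hx => hsub2 ⟨hx.1.le, hx.2⟩) (convex_Ioc _ _) hposa
    set K := P r2 / A r2 with hK
    have hK0 : 0 ≤ K := div_nonneg (hP0 r2 hr2) hAr2.le
    have hPK : ∀ r ∈ Set.Ioc a r2, P r ≤ K * A r := by
      intro r hr
      have := hm hr ⟨ha2, le_rfl⟩ hr.2
      exact (div_le_iff₀ (hposa r hr)).1 this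
    set C := 2 * K / a with hC
    have hB : ∀ r ∈ Set.Icc a r2, HasDerivAt (fun r => A r * Real.exp (-(C * r)))
        (2 * P r / r * Real.exp (-(C * r)) + A r * (Real.exp (-(C * r)) * -(C * 1))) r := by
      intro r hr
      exact (hA r (hsub2 hr)).mul (((hasDerivAt_id r).const_mul C).neg.exp)
    have hanti : AntitoneOn (fun r => A r * Real.exp (-(C * r))) (Set.Icc a r2) := by
      refine antitoneOn_of_deriv_nonpos (convex_Icc _ _)
        (fun r hr => (hB r hr).continuousAt.continuousWithinAt)
        (fun r hr => (hB r (interior_subset hr)).differentiableAt.differentiableWithinAt) ?_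
      intro r hr
      rw [(hB r (interior_subset hr)).deriv]
      rw [interior_Icc] at hr
      have hr' : r ∈ Set.Ioc a r2 := ⟨hr.1, hr.2.le⟩
      have h1 := hPK r hr'
      have h2 := hposa r hr'
      have h3 : 2 * P r / r ≤ C * A r := by
        rw [hC, div_mul_eq_mul_div, div_le_div_iff₀ (ha0.trans hr.1) ha0]
        have h4 : 0 ≤ K * A r := by positivity
        nlinarith [hr.1, mul_le_mul_of_nonneg_right h1 ha0.le]
      have h4 := Real.exp_pos (-(C * r))
      nlinarith
    have := hanti ⟨le_rfl, ha2.le⟩ ⟨ha2.le, le_rfl⟩ ha2.le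
    simp only [haA, zero_mul] at this
    have h5 := mul_pos hAr2 (Real.exp_pos (-(C * r2)))
    linarith
  exact ⟨pos, mono _ le_rfl (convex_Ioo _ _) pos⟩

lemma pd_add {i : Fin 3} {f g : E3 → ℝ} {x : E3} (hf : DifferentiableAt ℝ f x)
    (hg : DifferentiableAt ℝ g x) : pd i (fun y => f y + g y) x = pd i f x + pd i g x := by
  simp [pd, fderiv_fun_add hf hg]

lemma pd_sub {i : Fin 3} {f g : E3 → ℝ} {x : E3} (hf : DifferentiableAt ℝ f x)
    (hg : DifferentiableAt ℝ g x) : pd i (fun y => f y - g y) x = pd i f x - pd i g x := by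
  simp [pd, fderiv_fun_sub hf hg]

lemma pd_mul {i : Fin 3} {f g : E3 → ℝ} {x : E3} (hf : DifferentiableAt ℝ f x)
    (hg : DifferentiableAt ℝ g x) :
    pd i (fun y => f y * g y) x = pd i f x * g x + f x * pd i g x := by
  simp [pd, fderiv_fun_mul hf hg]; ring

lemma pd_pow {i : Fin 3} {f : E3 → ℝ} {x : E3} (hf : DifferentiableAt ℝ f x) :
    pd i (fun y => f y ^ 2) x = 2 * f x * pd i f x := by
  simp only [pow_two]
  rw [pd_mul hf hf]; ring

lemma pd_const_mul {i : Fin 3} {f : E3 → ℝ} {x : E3} (c : ℝ) (hf : DifferentiableAt ℝ f x) :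
    pd i (fun y => c * f y) x = c * pd i f x := by
  rw [pd_mul (differentiableAt_const c) hf]; simp [pd]

lemma pd_coord {i j : Fin 3} {x : E3} :
    pd i (fun y => y j) x = if j = i then 1 else 0 := by
  have : (fun y : E3 => y j) = (EuclideanSpace.proj j : E3 →L[ℝ] ℝ) := rfl
  rw [pd, this, ContinuousLinearMap.fderiv]
  simp

lemma fderiv_expand (L : E3 →L[ℝ] ℝ) (x : E3) :
    L x = x 0 * L (ee 0) + x 1 * L (ee 1) + x 2 * L (ee 2) := by
  have : x = x 0 • ee 0 + x 1 • ee 1 + x 2 • ee 2 := by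
    ext k; fin_cases k <;> simp
  conv_lhs => rw [this]
  simp

lemma sphere_sq (r : ℝ) (ω : sphere (0:E3) 1) :
    (r • (ω:E3)) 0 ^ 2 + (r • (ω:E3)) 1 ^ 2 + (r • (ω:E3)) 2 ^ 2 = r ^ 2 := by
  have h : ‖(ω:E3)‖ = 1 := by simp
  have := EuclideanSpace.norm_sq_eq (ω:E3)
  rw [h] at this
  simp only [Fin.sum_univ_three, Real.norm_eq_abs, sq_abs] at this
  simp only [PiLp.smul_apply, smul_eq_mul]
  linear_combination (-r ^ 2) * this

lemma M_deriv_radial {r₀ : ℝ} {g : E3 → ℝ} (hg : ContDiffOn ℝ 1 g (ball 0 r₀)) {r : ℝ}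
    (hr : r ∈ Set.Ioo (-r₀) r₀) : ∃ d, HasDerivAt (M g) d r ∧
      r * d = M (fun x => x 0 * pd 0 g x + x 1 * pd 1 g x + x 2 * pd 2 g x) r := by
  refine ⟨_, M_deriv hg hr, ?_⟩
  unfold M
  rw [← integral_const_mul]
  congr 1
  ext ω
  rw [← smul_eq_mul, ← map_smul, fderiv_expand]
  rfl

lemma pd_cont {r₀ : ℝ} {g : E3 → ℝ} (hg : ContDiffOn ℝ 1 g (ball 0 r₀)) (i : Fin 3) :
    ContinuousOn (pd i g) (ball 0 r₀) :=
  (hg.continuousOn_fderiv_of_isOpen isOpen_ball le_rfl).clm_apply continuousOn_const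

lemma M_congr {f g : E3 → ℝ} {r r₀ : ℝ} (hr : r ∈ Set.Ioo (-r₀) r₀)
    (h : ∀ x ∈ ball (0:E3) r₀, x 0 ^ 2 + x 1 ^ 2 + x 2 ^ 2 = r ^ 2 → f x = g x) :
    M f r = M g r := by
  unfold M
  congr 1
  ext ω
  exact h _ (smul_mem_ball' hr (by simp)) (sphere_sq r ω)

lemma M_add {f g : E3 → ℝ} {r r₀ : ℝ} (hr : r ∈ Set.Ioo (-r₀) r₀)
    (hf : ContinuousOn f (ball 0 r₀)) (hg : ContinuousOn g (ball 0 r₀)) :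
    M (f + g) r = M f r + M g r :=
  integral_add (M_int hf hr) (M_int hg hr)

lemma M_const_mul {f : E3 → ℝ} {r : ℝ} (c : ℝ) :
    M (fun x => c * f x) r = c * M f r :=
  integral_const_mul _ _

lemma coord_cd {n : WithTop ℕ∞} {s : Set E3} (i : Fin 3) : ContDiffOn ℝ n (fun x : E3 => x i) s :=
  (EuclideanSpace.proj i : E3 →L[ℝ] ℝ).contDiff.contDiffOn

lemma cd_dA {r₀ : ℝ} {g : E3 → ℝ} (hg : ContDiffOn ℝ 1 g (ball 0 r₀)) {x : E3}
    (hx : x ∈ ball 0 r₀) : DifferentiableAt ℝ g x :=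
  (hg.differentiableOn one_ne_zero).differentiableAt (isOpen_ball.mem_nhds hx)

lemma coord_dA {x : E3} (i : Fin 3) : DifferentiableAt ℝ (fun x : E3 => x i) x :=
  (EuclideanSpace.proj i : E3 →L[ℝ] ℝ).differentiableAt

lemma div_thm {r₀ : ℝ} {F : Fin 3 → E3 → ℝ} (hF : ∀ i, ContDiffOn ℝ 1 (F i) (ball 0 r₀)) {r : ℝ}
    (hr : r ∈ Set.Ioo (-r₀) r₀) :
    HasDerivAt (fun r => r * M (fun x => x 0 * F 0 x + x 1 * F 1 x + x 2 * F 2 x) r)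
      (r ^ 2 * M (fun x => pd 0 (F 0) x + pd 1 (F 1) x + pd 2 (F 2) x) r) r := by
  set g : E3 → ℝ := fun x => x 0 * F 0 x + x 1 * F 1 x + x 2 * F 2 x with hgdef
  have hg : ContDiffOn ℝ 1 g (ball 0 r₀) :=
    (((coord_cd 0).mul (hF 0)).add ((coord_cd 1).mul (hF 1))).add ((coord_cd 2).mul (hF 2))
  obtain ⟨d, hd, hd2⟩ := M_deriv_radial hg hr
  have hX : ∀ i j, ContDiffOn ℝ 1 (fun x => x i * F j x - x j * F i x) (ball 0 r₀) :=
    fun i j => ((coord_cd i).mul (hF j)).sub ((coord_cd j).mul (hF i))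
  have hXc : ∀ i j, ContinuousOn (fun x => x i * pd j (fun x => x i * F j x - x j * F i x) x
      - x j * pd i (fun x => x i * F j x - x j * F i x) x) (ball 0 r₀) := fun i j =>
    ((coord_cd (n := 0) i).continuousOn.mul (pd_cont (hX i j) j)).sub
      ((coord_cd (n := 0) j).continuousOn.mul (pd_cont (hX i j) i))
  have e01 := M_rot (hX 0 1) hr (show (0 : Fin 3) ≠ 1 by decide)
  have e02 := M_rot (hX 0 2) hr (show (0 : Fin 3) ≠ 2 by decide)
  have e12 := M_rot (hX 1 2) hr (show (1 : Fin 3) ≠ 2 by decide)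
  have hEc : ContinuousOn (fun x => x 0 * pd 0 g x + x 1 * pd 1 g x + x 2 * pd 2 g x)
      (ball 0 r₀) :=
    (((coord_cd (n := 0) 0).continuousOn.mul (pd_cont hg 0)).add
      ((coord_cd (n := 0) 1).continuousOn.mul (pd_cont hg 1))).add
      ((coord_cd (n := 0) 2).continuousOn.mul (pd_cont hg 2))
  have main : r ^ 2 * M (fun x => pd 0 (F 0) x + pd 1 (F 1) x + pd 2 (F 2) x) r
      = 1 * M g r + r * d := by
    rw [hd2, ← M_const_mul, one_mul]
    have h3 := M_add hr ((hXc 0 1).add (hXc 0 2)) (hXc 1 2)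
    have h2 := M_add hr (hXc 0 1) (hXc 0 2)
    have h1 := M_add hr hg.continuousOn hEc
    have h4 := M_add hr (hg.continuousOn.add hEc) (((hXc 0 1).add (hXc 0 2)).add (hXc 1 2))
    rw [h3, h2, h1, e01, e02, e12] at h4
    simp only [add_zero] at h4
    rw [← h4]
    refine M_congr hr fun x hx hxr => ?_
    have hd := fun i => cd_dA (hF i) hx
    have hc := fun i => coord_dA (x := x) i
    have hm := fun i j => (hc i).fun_mul (hd j)
    have hpdg : ∀ k, pd k g x = F k x + (x 0 * pd k (F 0) x + x 1 * pd k (F 1) x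
        + x 2 * pd k (F 2) x) := by
      intro k
      rw [hgdef, pd_add ((hm 0 0).fun_add (hm 1 1)) (hm 2 2), pd_add (hm 0 0) (hm 1 1),
        pd_mul (hc 0) (hd 0), pd_mul (hc 1) (hd 1), pd_mul (hc 2) (hd 2), pd_coord, pd_coord,
        pd_coord]
      fin_cases k <;> simp <;> ring
    have hpdX : ∀ k i j, pd k (fun x => x i * F j x - x j * F i x) x =
        ((if i = k then 1 else 0) * F j x + x i * pd k (F j) x)
        - ((if j = k then 1 else 0) * F i x + x j * pd k (F i) x) := by
      intro k i j
      rw [pd_sub (hm i j) (hm j i), pd_mul (hc i) (hd j), pd_mul (hc j) (hd i), pd_coord, pd_coord]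
    simp only [Pi.add_apply, hpdg, hpdX]
    simp
    rw [← hxr]
    ring
  rw [main]
  exact (hasDerivAt_id r).mul hd
def dot3 (f g : Fin 3 → E3 → ℝ) : E3 → ℝ := fun x => f 0 x * g 0 x + f 1 x * g 1 x + f 2 x * g 2 x

lemma dot3_cd {n : WithTop ℕ∞} {s : Set E3} {f g : Fin 3 → E3 → ℝ}
    (hf : ∀ i, ContDiffOn ℝ n (f i) s) (hg : ∀ i, ContDiffOn ℝ n (g i) s) :
    ContDiffOn ℝ n (dot3 f g) s :=
  (((hf 0).mul (hg 0)).add ((hf 1).mul (hg 1))).add ((hf 2).mul (hg 2))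

lemma pd_dot3 {f g : Fin 3 → E3 → ℝ} {x : E3} (k : Fin 3)
    (hf : ∀ i, DifferentiableAt ℝ (f i) x) (hg : ∀ i, DifferentiableAt ℝ (g i) x) :
    pd k (dot3 f g) x = (pd k (f 0) x * g 0 x + f 0 x * pd k (g 0) x)
      + (pd k (f 1) x * g 1 x + f 1 x * pd k (g 1) x)
      + (pd k (f 2) x * g 2 x + f 2 x * pd k (g 2) x) := by
  have hm := fun i => (hf i).fun_mul (hg i)
  unfold dot3
  rw [pd_add ((hm 0).fun_add (hm 1)) (hm 2), pd_add (hm 0) (hm 1), pd_mul (hf 0) (hg 0),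
    pd_mul (hf 1) (hg 1), pd_mul (hf 2) (hg 2)]

lemma pd_smooth {r₀ : ℝ} {g : E3 → ℝ} (hg : ContDiffOn ℝ (⊤ : ℕ∞) g (ball 0 r₀)) (i : Fin 3) :
    ContDiffOn ℝ (⊤ : ℕ∞) (pd i g) (ball 0 r₀) :=
  (hg.fderiv_of_isOpen isOpen_ball (by simp)).clm_apply contDiffOn_const

lemma pd_comm {r₀ : ℝ} {g : E3 → ℝ} (hg : ContDiffOn ℝ (⊤ : ℕ∞) g (ball 0 r₀)) (i j : Fin 3)
    {x : E3} (hx : x ∈ ball (0:E3) r₀) : pd i (pd j g) x = pd j (pd i g) x := by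
  have hat : ContDiffAt ℝ (⊤ : ℕ∞) g x := hg.contDiffAt (isOpen_ball.mem_nhds hx)
  have hs := hat.isSymmSndFDerivAt (by
    rw [minSmoothness_of_isRCLikeNormedField]
    exact WithTop.coe_le_coe.2 (le_top : (2:ℕ∞) ≤ ⊤))
  have hd : DifferentiableAt ℝ (fderiv ℝ g) x :=
    ((hg.fderiv_of_isOpen (m := (⊤ : ℕ∞)) isOpen_ball (by simp)).differentiableOn
      (by simp)).differentiableAt (isOpen_ball.mem_nhds hx)
  have h : ∀ i j, pd i (pd j g) x = fderiv ℝ (fderiv ℝ g) x (ee i) (ee j) := by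
    intro i j
    unfold pd
    rw [fderiv_clm_apply hd (by fun_prop)]
    simp
  rw [h, h]
  exact hs _ _

lemma pd_congr {r₀ : ℝ} {f g : E3 → ℝ} (h : ∀ y ∈ ball (0:E3) r₀, f y = g y) (i : Fin 3)
    {x : E3} (hx : x ∈ ball (0:E3) r₀) : pd i f x = pd i g x := by
  unfold pd
  have : f =ᶠ[nhds x] g := by
    filter_upwards [isOpen_ball.mem_nhds hx] with y hy using h y hy
  rw [this.fderiv_eq]

/-- coordinate functions -/
def XX : Fin 3 → E3 → ℝ := fun i x => x i

section core
variable {r₀ : ℝ} {V : Fin 3 → E3 → ℝ}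

/-- Jacobian entries -/
def aa (V : Fin 3 → E3 → ℝ) (i j : Fin 3) : E3 → ℝ := pd j (V i)

def ww (V : Fin 3 → E3 → ℝ) (i : Fin 3) : E3 → ℝ := dot3 (aa V i) XX

def F1 (V : Fin 3 → E3 → ℝ) (i : Fin 3) : E3 → ℝ := dot3 (aa V i) V

def QQ (V : Fin 3 → E3 → ℝ) : E3 → ℝ := fun x =>
  dot3 (aa V 0) (aa V 0) x + dot3 (aa V 1) (aa V 1) x + dot3 (aa V 2) (aa V 2) x

def F3 (V : Fin 3 → E3 → ℝ) (i : Fin 3) : E3 → ℝ := fun x =>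
  QQ V x * XX i x - 2 * dot3 (aa V i) (ww V) x - F1 V i x

lemma aa_cd
    (hV : ∀ i, ContDiffOn ℝ (⊤ : ℕ∞) (V i) (ball 0 r₀))
    (i j : Fin 3) : ContDiffOn ℝ (⊤ : ℕ∞) (aa V i j) (ball 0 r₀) := pd_smooth (hV i) j

lemma XX_cd (i : Fin 3) : ContDiffOn ℝ (⊤ : ℕ∞) (XX i) (ball 0 r₀) := coord_cd i

lemma ww_cd
    (hV : ∀ i, ContDiffOn ℝ (⊤ : ℕ∞) (V i) (ball 0 r₀))
    (i : Fin 3) : ContDiffOn ℝ (⊤ : ℕ∞) (ww V i) (ball 0 r₀) :=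
  dot3_cd (aa_cd hV i) XX_cd

lemma F1_cd
    (hV : ∀ i, ContDiffOn ℝ (⊤ : ℕ∞) (V i) (ball 0 r₀))
    (i : Fin 3) : ContDiffOn ℝ (⊤ : ℕ∞) (F1 V i) (ball 0 r₀) :=
  dot3_cd (aa_cd hV i) hV

lemma QQ_cd
    (hV : ∀ i, ContDiffOn ℝ (⊤ : ℕ∞) (V i) (ball 0 r₀))
    : ContDiffOn ℝ (⊤ : ℕ∞) (QQ V) (ball 0 r₀) :=
  ((dot3_cd (aa_cd hV 0) (aa_cd hV 0)).add (dot3_cd (aa_cd hV 1) (aa_cd hV 1))).add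
    (dot3_cd (aa_cd hV 2) (aa_cd hV 2))

lemma F3_cd
    (hV : ∀ i, ContDiffOn ℝ (⊤ : ℕ∞) (V i) (ball 0 r₀))
    (i : Fin 3) : ContDiffOn ℝ (⊤ : ℕ∞) (F3 V i) (ball 0 r₀) :=
  (((QQ_cd hV).mul (XX_cd i)).sub
    (contDiffOn_const.mul (dot3_cd (aa_cd hV i) (ww_cd hV)))).sub (F1_cd hV i)

lemma cd_one {f : E3 → ℝ} (h : ContDiffOn ℝ (⊤ : ℕ∞) f (ball 0 r₀)) : ContDiffOn ℝ 1 f (ball 0 r₀) :=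
  h.of_le (by exact_mod_cast le_top)

lemma dA {f : E3 → ℝ} (h : ContDiffOn ℝ (⊤ : ℕ∞) f (ball 0 r₀)) {x : E3}
    (hx : x ∈ ball (0:E3) r₀) : DifferentiableAt ℝ f x := cd_dA (cd_one h) hx

lemma c_facts
    (hV : ∀ i, ContDiffOn ℝ (⊤ : ℕ∞) (V i) (ball 0 r₀))
    (hsym : ∀ x ∈ ball (0:E3) r₀, ∀ i j, pd j (V i) x = pd i (V j) x)
    (htr : ∀ x ∈ ball (0:E3) r₀, pd 0 (V 0) x + pd 1 (V 1) x + pd 2 (V 2) x = 0)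
    {x : E3} (hx : x ∈ ball (0:E3) r₀) :
    (∀ i j, aa V i j x = aa V j i x) ∧
    (∀ i j k, pd k (aa V i j) x = pd k (aa V j i) x) ∧
    (∀ i j k, pd k (aa V i j) x = pd j (aa V i k) x) ∧
    (∀ k, pd k (aa V 0 0) x + pd k (aa V 1 1) x + pd k (aa V 2 2) x = 0) := by
  refine ⟨fun i j => hsym x hx i j, fun i j k => ?_, fun i j k => pd_comm (hV i) k j hx, fun k => ?_⟩
  · exact pd_congr (fun y hy => hsym y hy i j) k hx
  · have h := pd_congr (f := fun y => aa V 0 0 y + aa V 1 1 y + aa V 2 2 y) (g := fun _ => 0)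
      htr k hx
    have d := fun i => dA (aa_cd hV i i) hx
    rw [pd_add ((d 0).fun_add (d 1)) (d 2), pd_add (d 0) (d 1)] at h
    rw [h]; simp [pd]

set_option linter.unusedSimpArgs false in
lemma div_F
    (hV : ∀ i, ContDiffOn ℝ (⊤ : ℕ∞) (V i) (ball 0 r₀))
    (hsym : ∀ x ∈ ball (0:E3) r₀, ∀ i j, pd j (V i) x = pd i (V j) x)
    (htr : ∀ x ∈ ball (0:E3) r₀, pd 0 (V 0) x + pd 1 (V 1) x + pd 2 (V 2) x = 0)
    {x : E3} (hx : x ∈ ball (0:E3) r₀) :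
    pd 0 (F1 V 0) x + pd 1 (F1 V 1) x + pd 2 (F1 V 2) x = QQ V x ∧
    pd 0 (F3 V 0) x + pd 1 (F3 V 1) x + pd 2 (F3 V 2) x = 0 := by
  obtain ⟨h1, h2, h3, h4⟩ := c_facts hV hsym htr hx
  have da := fun i j => dA (aa_cd hV i j) hx
  have dV := fun i => dA (hV i) hx
  have dX := fun i => dA (XX_cd (r₀ := r₀) i) hx
  have dw := fun i => dA (ww_cd hV i) hx
  have dF := fun i => dA (F1_cd hV i) hx
  have dQ := dA (QQ_cd hV) hx
  have daa := fun i => dA (dot3_cd (aa_cd hV i) (aa_cd hV i)) hx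
  have daw := fun i => dA (dot3_cd (aa_cd hV i) (ww_cd hV)) hx
  have hpV : ∀ i j, pd j (V i) x = aa V i j x := fun i j => rfl
  have hpX : ∀ i j, pd j (XX i) x = if i = j then 1 else 0 := fun i j => pd_coord
  have p1 : ∀ k i, pd k (F1 V i) x = _ := fun k i => pd_dot3 k (da i) dV
  have p2 : ∀ k i, pd k (ww V i) x = _ := fun k i => pd_dot3 k (da i) dX
  have p3 : ∀ k i, pd k (dot3 (aa V i) (aa V i)) x = _ := fun k i => pd_dot3 k (da i) (da i)
  have p4 : ∀ k i, pd k (dot3 (aa V i) (ww V)) x = _ := fun k i => pd_dot3 k (da i) dw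
  have p5 : ∀ k, pd k (QQ V) x = pd k (dot3 (aa V 0) (aa V 0)) x
      + pd k (dot3 (aa V 1) (aa V 1)) x + pd k (dot3 (aa V 2) (aa V 2)) x := by
    intro k
    unfold QQ
    rw [pd_add ((daa 0).fun_add (daa 1)) (daa 2), pd_add (daa 0) (daa 1)]
  have p6 : ∀ k i, pd k (F3 V i) x = pd k (QQ V) x * XX i x + QQ V x * pd k (XX i) x
      - 2 * pd k (dot3 (aa V i) (ww V)) x - pd k (F1 V i) x := by
    intro k i
    unfold F3
    rw [pd_sub ((dQ.fun_mul (dX i)).fun_sub ((daw i).const_mul 2)) (dF i),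
      pd_sub (dQ.fun_mul (dX i)) ((daw i).const_mul 2), pd_mul dQ (dX i), pd_const_mul 2 (daw i)]
  have s1 := h1 1 0
  have s2 := h1 2 0
  have s3 := h1 2 1
  have q0 := (h3 0 1 0)
  have q1 := (h3 0 2 0)
  have q2 := (h3 0 2 1)
  have q3 := ((h2 1 0 0).trans (h3 0 1 0))
  have q4 := (h2 1 0 1)
  have q5 := (h2 1 0 2)
  have q6 := ((h3 1 1 0).trans (h2 1 0 1))
  have q7 := ((h3 1 2 0).trans (h2 1 0 2))
  have q8 := (h3 1 2 1)
  have q9 := ((h2 2 0 0).trans (h3 0 2 0))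
  have q10 := ((h2 2 0 1).trans (h3 0 2 1))
  have q11 := (h2 2 0 2)
  have q12 := (((h2 2 1 0).trans (h3 1 2 0)).trans (h2 1 0 2))
  have q13 := ((h2 2 1 1).trans (h3 1 2 1))
  have q14 := (h2 2 1 2)
  have q15 := ((h3 2 2 0).trans (h2 2 0 2))
  have q16 := ((h3 2 2 1).trans (h2 2 1 2))
  have t0 := h4 0
  have t1 := h4 1
  have t2 := h4 2
  have hF1 : pd 0 (F1 V 0) x + pd 1 (F1 V 1) x + pd 2 (F1 V 2) x = QQ V x := by
    simp only [p1, hpV, QQ, dot3, s1, s2, s3, q0, q1, q2, q3, q4, q5, q6, q7, q8, q9, q10, q11, q12, q13, q14, q15, q16] at t0 t1 t2 ⊢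
    linear_combination V 0 x * t0 + V 1 x * t1 + V 2 x * t2
  refine ⟨hF1, ?_⟩
  have : pd 0 (F3 V 0) x + pd 1 (F3 V 1) x + pd 2 (F3 V 2) x + QQ V x = QQ V x := by
    nth_rewrite 1 [← hF1]
    simp only [p6]
    simp only [p5, p4, p3, p2, hpX]
    have hw : ∀ i, ww V i x = aa V i 0 x * XX 0 x + aa V i 1 x * XX 1 x + aa V i 2 x * XX 2 x :=
      fun i => rfl
    simp only [QQ, dot3, s1, s2, s3, q0, q1, q2, q3, q4, q5, q6, q7, q8, q9, q10, q11, q12, q13, q14, q15, q16] at t0 t1 t2 ⊢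
    simp
    linear_combination (-2) * (ww V 0 x * t0 + ww V 1 x * t1 + ww V 2 x * t2)
  linarith

end core
section fin
variable {r₀ : ℝ} {V : Fin 3 → E3 → ℝ}

lemma pos_mem {r : ℝ} (hr : r ∈ Set.Ioo 0 r₀) : r ∈ Set.Ioo (-r₀) r₀ :=
  ⟨by linarith [hr.1, hr.2], hr.2⟩

lemma M_lin3 {r a b c : ℝ} {f g h : E3 → ℝ} (hr : r ∈ Set.Ioo (-r₀) r₀)
    (hf : ContinuousOn f (ball 0 r₀)) (hg : ContinuousOn g (ball 0 r₀))
    (hh : ContinuousOn h (ball 0 r₀)) :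
    M ((fun x => a * f x) + ((fun x => b * g x) + (fun x => c * h x))) r
      = a * M f r + (b * M g r + c * M h r) := by
  have k1 : ContinuousOn (fun x => a * f x) (ball 0 r₀) := continuousOn_const.mul hf
  have k2 : ContinuousOn (fun x => b * g x) (ball 0 r₀) := continuousOn_const.mul hg
  have k3 : ContinuousOn (fun x => c * h x) (ball 0 r₀) := continuousOn_const.mul hh
  rw [M_add hr k1 (k2.add k3), M_add hr k2 k3, M_const_mul, M_const_mul, M_const_mul]

lemma A_deriv
    (hV : ∀ i, ContDiffOn ℝ (⊤ : ℕ∞) (V i) (ball 0 r₀))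
    (hsym : ∀ x ∈ ball (0:E3) r₀, ∀ i j, pd j (V i) x = pd i (V j) x)
    {r : ℝ} (hr : r ∈ Set.Ioo 0 r₀) :
    HasDerivAt (M (dot3 V V)) (2 * M (dot3 XX (F1 V)) r / r) r := by
  have hr' := pos_mem hr
  obtain ⟨d, hd, h⟩ := M_deriv_radial (cd_one (dot3_cd hV hV)) hr'
  have : M (fun x => x 0 * pd 0 (dot3 V V) x + x 1 * pd 1 (dot3 V V) x
      + x 2 * pd 2 (dot3 V V) x) r = M (fun x => 2 * dot3 XX (F1 V) x) r := by
    refine M_congr hr' fun x hx _ => ?_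
    have dV := fun i => dA (hV i) hx
    have s1 := hsym x hx 1 0
    have s2 := hsym x hx 2 0
    have s3 := hsym x hx 2 1
    simp only [pd_dot3 _ dV dV]
    simp only [dot3, F1, aa, XX]
    rw [s1, s2, s3]; ring
  rw [this, M_const_mul] at h
  have h0 : r ≠ 0 := hr.1.ne'
  convert hd using 1
  rw [← h]; field_simp

lemma rP_deriv
    (hV : ∀ i, ContDiffOn ℝ (⊤ : ℕ∞) (V i) (ball 0 r₀))
    (hsym : ∀ x ∈ ball (0:E3) r₀, ∀ i j, pd j (V i) x = pd i (V j) x)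
    (htr : ∀ x ∈ ball (0:E3) r₀, pd 0 (V 0) x + pd 1 (V 1) x + pd 2 (V 2) x = 0)
    {r : ℝ} (hr : r ∈ Set.Ioo (-r₀) r₀) :
    HasDerivAt (fun r => r * M (dot3 XX (F1 V)) r) (r ^ 2 * M (QQ V) r) r := by
  have h := div_thm (fun i => cd_one (F1_cd hV i)) hr
  rw [M_congr hr (g := QQ V) fun x hx _ => (div_F hV hsym htr hx).1] at h
  exact h

lemma poh
    (hV : ∀ i, ContDiffOn ℝ (⊤ : ℕ∞) (V i) (ball 0 r₀))
    (hsym : ∀ x ∈ ball (0:E3) r₀, ∀ i j, pd j (V i) x = pd i (V j) x)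
    (htr : ∀ x ∈ ball (0:E3) r₀, pd 0 (V 0) x + pd 1 (V 1) x + pd 2 (V 2) x = 0)
    {r : ℝ} (hr : r ∈ Set.Ioo 0 r₀) :
    r ^ 2 * M (QQ V) r = 2 * M (dot3 (ww V) (ww V)) r + M (dot3 XX (F1 V)) r := by
  have hr0 : 0 < r₀ := hr.1.trans hr.2
  have hd : ∀ s ∈ Set.Ioo (-r₀) r₀, HasDerivAt
      (fun r => r * M (fun x => x 0 * F3 V 0 x + x 1 * F3 V 1 x + x 2 * F3 V 2 x) r) 0 s := by
    intro s hs
    have h := div_thm (fun i => cd_one (F3_cd hV i)) hs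
    rw [M_congr hs (g := fun x => 0 * (0:ℝ)) fun x hx _ => by
      rw [(div_F hV hsym htr hx).2]; ring, M_const_mul] at h
    simpa using h
  have hc := isOpen_Ioo.is_const_of_deriv_eq_zero (isPreconnected_Ioo)
    (fun s hs => (hd s hs).differentiableAt.differentiableWithinAt)
    (fun s hs => (hd s hs).deriv) (pos_mem hr) (y := 0) ⟨by linarith, hr0⟩
  simp only [zero_mul] at hc
  have h1 := (mul_eq_zero.1 hc).resolve_left hr.1.ne'
  have hr' := pos_mem hr
  have c1 := (QQ_cd hV).continuousOn
  have c2 := (dot3_cd (ww_cd hV) (ww_cd hV)).continuousOn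
  have c3 := (dot3_cd XX_cd (F1_cd hV)).continuousOn
  rw [M_congr hr' (g := (fun x => r^2 * QQ V x) + ((fun x => (-2) * dot3 (ww V) (ww V) x) +
      (fun x => (-1) * dot3 XX (F1 V) x))) ?_, M_lin3 hr' c1 c2 c3] at h1
  · linarith
  · intro x hx hxr
    have s1 := hsym x hx 1 0
    have s2 := hsym x hx 2 0
    have s3 := hsym x hx 2 1
    simp only [Pi.add_apply]
    rw [← hxr]
    simp only [F3, dot3, ww, aa, XX]
    rw [s1, s2, s3]
    ring

lemma P_deriv
    (hV : ∀ i, ContDiffOn ℝ (⊤ : ℕ∞) (V i) (ball 0 r₀))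
    (hsym : ∀ x ∈ ball (0:E3) r₀, ∀ i j, pd j (V i) x = pd i (V j) x)
    (htr : ∀ x ∈ ball (0:E3) r₀, pd 0 (V 0) x + pd 1 (V 1) x + pd 2 (V 2) x = 0)
    {r : ℝ} (hr : r ∈ Set.Ioo 0 r₀) :
    HasDerivAt (M (dot3 XX (F1 V))) (2 * M (dot3 (ww V) (ww V)) r / r) r := by
  have hr' := pos_mem hr
  have h1 := rP_deriv hV hsym htr hr'
  have h2 := (M_deriv (cd_one (dot3_cd XX_cd (F1_cd hV))) hr')
  have h3 := ((hasDerivAt_id r).mul h2).unique h1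
  rw [poh hV hsym htr hr] at h3
  convert h2 using 1
  have h0 : r ≠ 0 := hr.1.ne'
  rw [div_eq_iff h0]
  simp only [id] at h3
  linarith

lemma QQ_nonneg (x : E3) : 0 ≤ QQ V x := by
  simp only [QQ, dot3, ← sq]; positivity

lemma H_eq
    (hV : ∀ i, ContDiffOn ℝ (⊤ : ℕ∞) (V i) (ball 0 r₀))
    (hsym : ∀ x ∈ ball (0:E3) r₀, ∀ i j, pd j (V i) x = pd i (V j) x)
    (htr : ∀ x ∈ ball (0:E3) r₀, pd 0 (V 0) x + pd 1 (V 1) x + pd 2 (V 2) x = 0)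
    {r : ℝ} (hr : r ∈ Set.Ioo 0 r₀) :
    ∫ x in ball (0:E3) r, QQ V x = r * M (dot3 XX (F1 V)) r := by
  rw [polar (QQ_cd hV).continuousOn hr.1 hr.2]
  have hs : ∀ s ∈ Set.uIcc 0 r, s ∈ Set.Ioo (-r₀) r₀ := by
    intro s hs
    rw [Set.uIcc_of_le hr.1.le] at hs
    exact ⟨by linarith [hs.1, hr.1, hr.2], by linarith [hs.2, hr.2]⟩
  rw [intervalIntegral.integral_eq_sub_of_hasDerivAt
    (fun s h => rP_deriv hV hsym htr (hs s h))]
  · simp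
  · apply ContinuousOn.intervalIntegrable
    intro s h
    exact ((continuousAt_id.pow 2).mul (M_continuousAt (cd_one (QQ_cd hV)) (hs s h))).continuousWithinAt

lemma P_nonneg
    (hV : ∀ i, ContDiffOn ℝ (⊤ : ℕ∞) (V i) (ball 0 r₀))
    (hsym : ∀ x ∈ ball (0:E3) r₀, ∀ i j, pd j (V i) x = pd i (V j) x)
    (htr : ∀ x ∈ ball (0:E3) r₀, pd 0 (V 0) x + pd 1 (V 1) x + pd 2 (V 2) x = 0)
    {r : ℝ} (hr : r ∈ Set.Ioo 0 r₀) : 0 ≤ M (dot3 XX (F1 V)) r := by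
  have h := H_eq hV hsym htr hr
  have h2 : 0 ≤ ∫ x in ball (0:E3) r, QQ V x := integral_nonneg QQ_nonneg
  rw [h] at h2
  exact nonneg_of_mul_nonneg_right h2 hr.1

lemma M_nonneg {f : E3 → ℝ} {r : ℝ} (h : ∀ x, 0 ≤ f x) : 0 ≤ M f r := integral_nonneg fun _ => h _

lemma dot_nonneg (f : Fin 3 → E3 → ℝ) (x : E3) : 0 ≤ dot3 f f x := by
  simp only [dot3, ← sq]; positivity

lemma P_CS
    (hV : ∀ i, ContDiffOn ℝ (⊤ : ℕ∞) (V i) (ball 0 r₀))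
    (hsym : ∀ x ∈ ball (0:E3) r₀, ∀ i j, pd j (V i) x = pd i (V j) x)
    {r : ℝ} (hr : r ∈ Set.Ioo 0 r₀) (hA : 0 < M (dot3 V V) r) :
    M (dot3 XX (F1 V)) r ^ 2 ≤ M (dot3 V V) r * M (dot3 (ww V) (ww V)) r := by
  have hr' := pos_mem hr
  set A := M (dot3 V V) r with hAd
  set P := M (dot3 XX (F1 V)) r with hPd
  set W := M (dot3 (ww V) (ww V)) r with hWd
  have c1 := (dot3_cd hV hV).continuousOn
  have c2 := (dot3_cd (ww_cd hV) (ww_cd hV)).continuousOn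
  have c3 := (dot3_cd XX_cd (F1_cd hV)).continuousOn
  have h0 : 0 ≤ M (dot3 (fun i x => A * ww V i x - P * V i x)
    (fun i x => A * ww V i x - P * V i x)) r := M_nonneg (dot_nonneg _)
  rw [M_congr hr' (g := (fun x => P^2 * dot3 V V x) + ((fun x => A^2 * dot3 (ww V) (ww V) x) +
      (fun x => (-2*A*P) * dot3 XX (F1 V) x))) ?_, M_lin3 hr' c1 c2 c3, ← hAd, ← hPd, ← hWd] at h0
  · have : 0 ≤ A * (A * W - P ^ 2) := by nlinarith
    linarith [nonneg_of_mul_nonneg_right this hA]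
  · intro x hx hxr
    have s1 := hsym x hx 1 0
    have s2 := hsym x hx 2 0
    have s3 := hsym x hx 2 1
    simp only [Pi.add_apply]
    simp only [F1, dot3, ww, aa, XX]
    rw [s1, s2, s3]
    ring

lemma A_ne
    (hV : ∀ i, ContDiffOn ℝ (⊤ : ℕ∞) (V i) (ball 0 r₀))
    (hne : ¬ ∀ x ∈ ball (0:E3) r₀, ∀ i, V i x = 0) :
    ∃ r ∈ Set.Ioo 0 r₀, M (dot3 V V) r ≠ 0 := by
  by_contra! hcon
  apply hne
  intro x hx
  have hr0 : 0 < r₀ := dist_nonneg.trans_lt (mem_ball.1 hx)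
  have hA : ∀ r ∈ Set.Ico 0 r₀, M (dot3 V V) r = 0 := by
    intro r hr
    rcases hr.1.eq_or_lt with h | h
    · subst h
      have hc := M_continuousAt (cd_one (dot3_cd hV hV)) (r := 0) ⟨by linarith, hr0⟩
      have h1 : Filter.Tendsto (M (dot3 V V)) (nhdsWithin 0 (Set.Ioi 0)) (nhds (M (dot3 V V) 0)) :=
        hc.tendsto.mono_left nhdsWithin_le_nhds
      have h2 : Filter.Tendsto (M (dot3 V V)) (nhdsWithin 0 (Set.Ioi 0)) (nhds 0) := by
        refine tendsto_const_nhds.congr' ?_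
        filter_upwards [Ioo_mem_nhdsGT hr0] with s hs using (hcon s hs).symm
      exact tendsto_nhds_unique h1 h2
    · exact hcon r ⟨h, hr.2⟩
  have hxr : ‖x‖ ∈ Set.Ico 0 r₀ := ⟨norm_nonneg _, by simpa using hx⟩
  have hxr' : ‖x‖ ∈ Set.Ioo (-r₀) r₀ := ⟨by linarith [norm_nonneg x], hxr.2⟩
  obtain ⟨ω, hω⟩ : ∃ ω : sphere (0:E3) 1, ‖x‖ • (ω:E3) = x := by
    by_cases h : x = 0
    · exact ⟨⟨ee 0, by simp⟩, by simp [h]⟩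
    · have hn : ‖x‖ ≠ 0 := norm_ne_zero_iff.2 h
      exact ⟨⟨‖x‖⁻¹ • x, by simp [norm_smul, hn]⟩, by simp [smul_smul, hn]⟩
  have c1 := (dot3_cd hV hV).continuousOn
  have : sig.IsOpenPosMeasure := by unfold sig; infer_instance
  have hz := (Continuous.ae_eq_iff_eq sig (M_cont c1 hxr') continuous_zero).1
    ((integral_eq_zero_iff_of_nonneg (fun _ => dot_nonneg V _) (M_int c1 hxr')).1 (hA _ hxr))
  have hz2 := congrFun hz ω
  simp only [hω, dot3, Pi.zero_apply] at hz2
  have a0 := mul_self_nonneg (V 0 x)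
  have a1 := mul_self_nonneg (V 1 x)
  have a2 := mul_self_nonneg (V 2 x)
  intro i
  apply mul_self_eq_zero.1
  fin_cases i <;> simp <;> nlinarith

lemma core_result
    (hV : ∀ i, ContDiffOn ℝ (⊤ : ℕ∞) (V i) (ball 0 r₀))
    (hsym : ∀ x ∈ ball (0:E3) r₀, ∀ i j, pd j (V i) x = pd i (V j) x)
    (htr : ∀ x ∈ ball (0:E3) r₀, pd 0 (V 0) x + pd 1 (V 1) x + pd 2 (V 2) x = 0)
    (hne : ¬ ∀ x ∈ ball (0:E3) r₀, ∀ i, V i x = 0) :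
    (∀ r ∈ Set.Ioo 0 r₀, 0 < M (dot3 V V) r) ∧
      MonotoneOn (fun r => M (dot3 XX (F1 V)) r / M (dot3 V V) r) (Set.Ioo 0 r₀) :=
  ode_part (W := M (dot3 (ww V) (ww V))) (fun r hr => A_deriv hV hsym hr)
    (fun r hr => P_deriv hV hsym htr hr)
    (fun r hr => M_nonneg (dot_nonneg V)) (fun r hr => P_nonneg hV hsym htr hr)
    (fun r hr h => P_CS hV hsym hr h) (A_ne hV hne)

end fin

lemma comp_pd {r₀ : ℝ} {v : E3 → E3} (hv : ContDiffOn ℝ (⊤ : ℕ∞) v (ball 0 r₀)) {x : E3}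
    (hx : x ∈ ball (0:E3) r₀) (i j : Fin 3) :
    pd j (fun y => v y i) x = (fderiv ℝ v x (ee j)) i := by
  have hd : DifferentiableAt ℝ v x :=
    (hv.differentiableOn (by simp)).differentiableAt (isOpen_ball.mem_nhds hx)
  have h := ((EuclideanSpace.proj i : E3 →L[ℝ] ℝ).hasFDerivAt.comp x
    hd.hasFDerivAt)
  have h2 : fderiv ℝ (fun y => v y i) x = _ := h.fderiv
  unfold pd
  rw [h2]; rfl

/-- Almgren frequency monotonicity for harmonic fields (Item c) of the fourth bullet of
Proposition 7.1, Euclidean case): `h > 0` on `(0, r₀)` and `N(r) = r·H(r)/h(r)` is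
nondecreasing. -/
theorem frequency_monotone (r₀ : ℝ) (hr₀ : 0 < r₀) (v : E3 → E3)
    (hv : IsHarmonicField (Metric.ball (0 : E3) r₀) v)
    (hne : ¬ ∀ x ∈ Metric.ball (0 : E3) r₀, v x = 0) :
    (∀ r ∈ Set.Ioo (0:ℝ) r₀,
        0 < ∫ x in Metric.sphere (0 : E3) r, ‖v x‖ ^ 2 ∂μH[2]) ∧
      MonotoneOn (fun r =>
          r * (∫ x in Metric.ball (0 : E3) r, frobSq v x) /
            ∫ x in Metric.sphere (0 : E3) r, ‖v x‖ ^ 2 ∂μH[2])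
        (Set.Ioo 0 r₀) := by
  obtain ⟨hs, hv⟩ := hv
  set V : Fin 3 → E3 → ℝ := fun i x => v x i with hVd
  have hV : ∀ i, ContDiffOn ℝ (⊤ : ℕ∞) (V i) (ball 0 r₀) := contDiffOn_euclidean.1 hs
  have hpd : ∀ x ∈ ball (0:E3) r₀, ∀ i j, pd j (V i) x = (fderiv ℝ v x (ee j)) i :=
    fun x hx i j => comp_pd hs hx i j
  have hsym : ∀ x ∈ ball (0:E3) r₀, ∀ i j, pd j (V i) x = pd i (V j) x := by
    intro x hx i j
    rw [hpd x hx, hpd x hx]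
    simpa [EuclideanSpace.inner_single_right] using (hv x hx).1 (ee j) (ee i)
  have htr : ∀ x ∈ ball (0:E3) r₀, pd 0 (V 0) x + pd 1 (V 1) x + pd 2 (V 2) x = 0 := by
    intro x hx
    rw [hpd x hx, hpd x hx, hpd x hx, ← (hv x hx).2,
      LinearMap.trace_eq_sum_inner _ (EuclideanSpace.basisFun (Fin 3) ℝ), Fin.sum_univ_three]
    simp [EuclideanSpace.inner_single_left]
  have hne' : ¬ ∀ x ∈ ball (0:E3) r₀, ∀ i, V i x = 0 := by
    intro h
    exact hne fun x hx => by ext i; exact h x hx i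
  obtain ⟨hpos, hmono⟩ := core_result hV hsym htr hne'
  obtain ⟨c, hc, hcM⟩ := muH_integral
  have hnorm : (fun x => ‖v x‖ ^ 2) = dot3 V V := by
    ext x
    rw [EuclideanSpace.norm_sq_eq]
    simp only [Fin.sum_univ_three, Real.norm_eq_abs, sq_abs, dot3, hVd]
    ring
  have hh : ∀ r, 0 < r → ∫ x in sphere (0 : E3) r, ‖v x‖ ^ 2 ∂μH[2] = c * r ^ 2 * M (dot3 V V) r := by
    intro r hr
    rw [hcM _ r hr, hnorm]
  have hH : ∀ r ∈ Set.Ioo 0 r₀, ∫ x in ball (0 : E3) r, frobSq v x = r * M (dot3 XX (F1 V)) r := by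
    intro r hr
    rw [← H_eq hV hsym htr hr]
    refine setIntegral_congr_fun measurableSet_ball fun x hx => ?_
    have hx' := ball_subset_ball hr.2.le hx
    simp only [frobSq, QQ, dot3, aa, hpd x hx', EuclideanSpace.norm_sq_eq, Fin.sum_univ_three,
      Real.norm_eq_abs, sq_abs]
    ring
  refine ⟨fun r hr => ?_, fun a ha b hb hab => ?_⟩
  · rw [hh r hr.1]
    have := hpos r hr
    have := hr.1
    positivity
  · have key : ∀ r ∈ Set.Ioo 0 r₀, r * (∫ x in ball (0 : E3) r, frobSq v x) /
        ∫ x in sphere (0 : E3) r, ‖v x‖ ^ 2 ∂μH[2]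
        = c⁻¹ * (M (dot3 XX (F1 V)) r / M (dot3 V V) r) := by
      intro r hr
      rw [hh r hr.1, hH r hr]
      have := (hpos r hr).ne'
      have := hr.1.ne'
      have := hc.ne'
      field_simp
    simp only [key a ha, key b hb]
    exact mul_le_mul_of_nonneg_left (hmono ha hb hab) (inv_nonneg.2 hc.le)
end
end

section
/- Let N₀ > 0, C ≥ 0, C′ ≥ 0 and γ ∈ (0, 1]. Let D ⊆ ℂ be the open unit disk, let α : D → ℂ and v : D → ℝ be continuous, and set K = {z ∈ D : α(z) = 0 and v(z) = 0}. Assume: (i) α and v are smooth on D ∖ K and there satisfy the system ∂_z α = −(1/2)(1+N₀)(1+τ₀(z))·v and ∂_{z̄} v = 2N₀(1+τ₁(z))·α, where τ₀, τ₁ : D → ℂ are continuous with |τ₀(z)| + |τ₁(z)| ≤ C|z|² for all z; (ii) |α(z)| + |v(z)| ≤ C′·dist(z, K)^γ whenever |z| ≤ 3/4; (iii) the first derivatives of α and v are square-integrable on {|z| ≤ 3/4} ∖ K and lim_{ρ→0⁺} ∫_{{z : |z| ≤ 3/4, 0 < |α(z)|+|v(z)| < ρ}} (|Dα|² + |Dv|²)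 = 0; (iv) 0 is an accumulation point of K ∖ {0}. Then there exist radii 0 < a < b ≤ 3/4 such that α and v vanish identically on the annulus {z : a ≤ |z| ≤ b}. -/
open MeasureTheory Metric Filter

noncomputable section

/-- The Wirtinger derivative `∂_z g = (1/2)(∂_x g − i·∂_y g)` of a map `g : ℂ → ℂ`,
computed from its real total derivative. -/
def wirtingerZ (g : ℂ → ℂ) (z : ℂ) : ℂ :=
  (1 / 2 : ℂ) * (fderiv ℝ g z 1 - Complex.I * fderiv ℝ g z Complex.I)

/-- The Wirtinger derivative `∂_z̄ v = (1/2)(∂_x v + i·∂_y v)` of a real-valued `v : ℂ → ℝ`. -/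
def wirtingerZbar (v : ℂ → ℝ) (z : ℂ) : ℂ :=
  (1 / 2 : ℂ) * ((fderiv ℝ v z 1 : ℝ) + Complex.I * ((fderiv ℝ v z Complex.I : ℝ) : ℂ))

/-- The squared Euclidean norm of the real total derivative of `g : ℂ → ℂ`. -/
def DsqC (g : ℂ → ℂ) (z : ℂ) : ℝ :=
  ‖fderiv ℝ g z 1‖ ^ 2 + ‖fderiv ℝ g z Complex.I‖ ^ 2

/-- The squared Euclidean norm of the real total derivative of `v : ℂ → ℝ`. -/
def DsqR (v : ℂ → ℝ) (z : ℂ) : ℝ :=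
  ‖fderiv ℝ v z 1‖ ^ 2 + ‖fderiv ℝ v z Complex.I‖ ^ 2

/-- The `∂̄` operator on complex valued functions. -/
def dbar (g : ℂ → ℂ) (z : ℂ) : ℂ :=
  (1 / 2 : ℂ) * (fderiv ℝ g z 1 + Complex.I * fderiv ℝ g z Complex.I)

/-- The unit vector of angle `t`. -/
def cis (t : ℝ) : ℂ := (Real.cos t : ℂ) + (Real.sin t : ℂ) * Complex.I

lemma cis_continuous : Continuous cis := by
  unfold cis; fun_prop

lemma norm_cis (t : ℝ) : ‖cis t‖ = 1 := by
  unfold cis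
  rw [Complex.ofReal_cos, Complex.ofReal_sin, ← Complex.exp_mul_I]
  exact Complex.norm_exp_ofReal_mul_I t

lemma cis_hasDerivAt (t : ℝ) : HasDerivAt cis (Complex.I * cis t) t := by
  have h1 := (Real.hasDerivAt_cos t).ofReal_comp
  have h2 := ((Real.hasDerivAt_sin t).ofReal_comp).mul_const Complex.I
  have h3 := h1.add h2
  have e : Complex.I * cis t = ((-Real.sin t : ℝ) : ℂ) + ((Real.cos t : ℝ) : ℂ) * Complex.I := by
    unfold cis
    push_cast
    linear_combination (Complex.sin t) * Complex.I_sq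
  rw [e]
  exact h3

lemma polar_lint (f : ℂ → ENNReal) (hf : Measurable f) :
    ∫⁻ z, f z = ∫⁻ r in Set.Ioi (0:ℝ), ∫⁻ t in Set.Ioo (-Real.pi) Real.pi,
      ENNReal.ofReal r * f (r * cis t) := by
  rw [← Complex.lintegral_comp_polarCoord_symm, polarCoord_target, Measure.volume_eq_prod,
    ← Measure.prod_restrict, lintegral_prod]
  · simp only [Complex.polarCoord_symm_apply, smul_eq_mul, cis]
  · simp only [Complex.polarCoord_symm_apply, smul_eq_mul]
    refine Measurable.aemeasurable ?_
    refine Measurable.mul (by fun_prop) (hf.comp (by fun_prop))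

lemma dbar_continuous {h : ℂ → ℂ} (hh : ContDiff ℝ 1 h) : Continuous (dbar h) := by
  have := hh.continuous_fderiv (by norm_num)
  unfold dbar
  fun_prop

lemma dbar_radial (L : ℂ →L[ℝ] ℂ) (t : ℝ) :
    L (cis t) = 2 * (starRingEnd ℂ (cis t)) * ((1 / 2 : ℂ) * (L 1 + Complex.I * L Complex.I))
      - Complex.I * L (Complex.I * cis t) := by
  have h1 : cis t = (Real.cos t) • (1:ℂ) + (Real.sin t) • Complex.I := by
    simp [cis]
  have h2 : Complex.I * cis t = (-Real.sin t) • (1:ℂ) + (Real.cos t) • Complex.I := by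
    simp [cis]; ring_nf; simp; ring
  have h3 : (starRingEnd ℂ (cis t)) = (Real.cos t : ℂ) - (Real.sin t : ℂ) * Complex.I := by
    simp [cis, Complex.conj_ofReal, sub_eq_add_neg, -Complex.ofReal_cos, -Complex.ofReal_sin]
  rw [h2, h3, h1]
  simp only [map_add, map_smul]
  simp only [Complex.real_smul]
  push_cast
  linear_combination (Complex.sin t * L Complex.I) * Complex.I_sq

lemma pompeiu0 (h : ℂ → ℂ) (hh : ContDiff ℝ 1 h) (hc : HasCompactSupport h) :
    ENNReal.ofReal Real.pi * ‖h 0‖ₑ ≤ ∫⁻ z, ‖dbar h z‖ₑ * ‖z‖ₑ⁻¹ := by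
  obtain ⟨L, hL0, hL⟩ : ∃ L : ℝ, 0 < L ∧ ∀ z, L ≤ ‖z‖ → h z = 0 := by
    obtain ⟨L, hL⟩ := hc.isCompact.isBounded.subset_ball 0
    refine ⟨max L 1, by positivity, fun z hz => ?_⟩
    by_contra hne
    have := hL (subset_tsupport _ hne)
    simp at this
    have := le_max_left L 1
    linarith
  have hfc : Continuous (fderiv ℝ h) := hh.continuous_fderiv (by norm_num)
  have hdiff : ∀ z, HasFDerivAt h (fderiv ℝ h z) z := fun z =>
    (hh.differentiable (by norm_num) z).hasFDerivAt
  have hcis := cis_continuous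
  have hdb := dbar_continuous hh
  have hrad : ∀ t : ℝ, ∫ r in (0:ℝ)..L, fderiv ℝ h (r * cis t) (cis t) = - h 0 := by
    intro t
    have : ∀ r ∈ Set.uIcc 0 L, HasDerivAt (fun r : ℝ => h (r * cis t))
        (fderiv ℝ h (r * cis t) (cis t)) r := by
      intro r _
      have h1 : HasDerivAt (fun r : ℝ => (r : ℂ) * cis t) (cis t) r := by
        simpa using (Complex.ofRealCLM.hasDerivAt (x := r)).mul_const (cis t)
      exact (hdiff _).comp_hasDerivAt r h1
    rw [intervalIntegral.integral_eq_sub_of_hasDerivAt this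
      (Continuous.intervalIntegrable (by fun_prop) _ _)]
    rw [hL (L * cis t) (by simp [norm_cis, abs_of_pos hL0])]
    simp
  have hang : ∀ r : ℝ, 0 < r → ∫ t in (-Real.pi)..Real.pi, fderiv ℝ h (r * cis t) (cis t) =
      ∫ t in (-Real.pi)..Real.pi, 2 * (starRingEnd ℂ (cis t)) * dbar h (r * cis t) := by
    intro r hr
    have hz : ∫ t in (-Real.pi)..Real.pi, fderiv ℝ h (r * cis t) (r * (Complex.I * cis t)) = 0 := by
      have : ∀ t ∈ Set.uIcc (-Real.pi) Real.pi, HasDerivAt (fun t : ℝ => h (r * cis t))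
          (fderiv ℝ h (r * cis t) (r * (Complex.I * cis t))) t := by
        intro t _
        exact (hdiff _).comp_hasDerivAt t ((cis_hasDerivAt t).const_mul (r:ℂ))
      rw [intervalIntegral.integral_eq_sub_of_hasDerivAt this
        (Continuous.intervalIntegrable (by fun_prop) _ _)]
      simp [cis]
    have hz' : ∫ t in (-Real.pi)..Real.pi,
        Complex.I * fderiv ℝ h (r * cis t) (Complex.I * cis t) = 0 := by
      have e : ∀ t : ℝ, fderiv ℝ h (r * cis t) (r * (Complex.I * cis t)) =
          (r : ℂ) * fderiv ℝ h (r * cis t) (Complex.I * cis t) := by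
        intro t
        have := (fderiv ℝ h (r * cis t)).map_smul r (Complex.I * cis t)
        simpa [Complex.real_smul] using this
      simp_rw [e] at hz
      rw [intervalIntegral.integral_const_mul] at hz ⊢
      have : (r : ℂ) ≠ 0 := by exact_mod_cast hr.ne'
      rcases mul_eq_zero.1 hz with h' | h'
      · exact absurd h' this
      · rw [h', mul_zero]
    simp_rw [fun t : ℝ => dbar_radial (fderiv ℝ h (r * cis t)) t]
    rw [intervalIntegral.integral_sub, hz', sub_zero]
    · rfl
    · exact Continuous.intervalIntegrable (by fun_prop) _ _
    · exact Continuous.intervalIntegrable (by fun_prop) _ _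
  have hswap : ∫ r in (0:ℝ)..L, ∫ t in (-Real.pi)..Real.pi, fderiv ℝ h (r * cis t) (cis t)
      = - (2 * Real.pi) * h 0 := by
    rw [intervalIntegral_intervalIntegral_swap]
    · simp_rw [hrad]
      rw [intervalIntegral.integral_const, Complex.real_smul]
      push_cast
      ring
    · have hcont : Continuous (Function.uncurry
          (fun r t : ℝ => fderiv ℝ h (r * cis t) (cis t))) := by
        unfold Function.uncurry
        fun_prop
      exact (hcont.continuousOn.integrableOn_compact
        (isCompact_uIcc.prod isCompact_uIcc)).mono_set
        (Set.prod_mono Set.uIoc_subset_uIcc Set.uIoc_subset_uIcc)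
  have hnorm : ‖(2 * (Real.pi:ℂ)) * h 0‖ₑ ≤ 2 * ∫⁻ z, ‖dbar h z‖ₑ * ‖z‖ₑ⁻¹ := by
    rw [polar_lint _ (by fun_prop)]
    calc ‖(2 * (Real.pi:ℂ)) * h 0‖ₑ = ‖∫ r in (0:ℝ)..L, ∫ t in (-Real.pi)..Real.pi,
            fderiv ℝ h (r * cis t) (cis t)‖ₑ := by
          rw [hswap, neg_mul, enorm_neg]
      _ ≤ ∫⁻ r in Set.Ioc 0 L, ‖∫ t in (-Real.pi)..Real.pi,
            fderiv ℝ h (r * cis t) (cis t)‖ₑ := by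
          rw [intervalIntegral.integral_of_le hL0.le]
          exact enorm_integral_le_lintegral_enorm _
      _ ≤ ∫⁻ r in Set.Ioc 0 L, 2 * ∫⁻ t in Set.Ioo (-Real.pi) Real.pi,
            ENNReal.ofReal r * (‖dbar h (r * cis t)‖ₑ * ‖(r:ℂ) * cis t‖ₑ⁻¹) := by
          refine setLIntegral_mono' measurableSet_Ioc fun r hr => ?_
          rw [hang r hr.1, intervalIntegral.integral_of_le (by linarith [Real.pi_pos]),
            integral_Ioc_eq_integral_Ioo, ← lintegral_const_mul' _ _ (by simp)]
          refine (enorm_integral_le_lintegral_enorm _).trans (lintegral_mono fun t => ?_)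
          have e1 : ‖(r:ℂ) * cis t‖ₑ = ENNReal.ofReal r := by
            rw [← ofReal_norm, norm_mul, norm_cis, mul_one, Complex.norm_real,
              Real.norm_of_nonneg hr.1.le]
          have e2 : ‖(starRingEnd ℂ) (cis t)‖ₑ = 1 := by
            rw [← ofReal_norm, RCLike.norm_conj, norm_cis]; simp
          have e3 : ‖(2:ℂ)‖ₑ = 2 := by
            rw [← ofReal_norm]; simp
          have e4 : ENNReal.ofReal r ≠ 0 := by simpa using hr.1
          simp only [enorm_mul, e2, e3, mul_one] 
          simp only [enorm_mul] at e1
          rw [e1, mul_comm (ENNReal.ofReal r), mul_assoc, ENNReal.inv_mul_cancel e4 (by simp), mul_one]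
      _ ≤ ∫⁻ r in Set.Ioi 0, 2 * ∫⁻ t in Set.Ioo (-Real.pi) Real.pi,
            ENNReal.ofReal r * (‖dbar h (r * cis t)‖ₑ * ‖(r:ℂ) * cis t‖ₑ⁻¹) :=
          lintegral_mono_set Set.Ioc_subset_Ioi_self
      _ = _ := lintegral_const_mul' _ _ (by simp)
  have e5 : ‖(2 * (Real.pi:ℂ)) * h 0‖ₑ = 2 * (ENNReal.ofReal Real.pi * ‖h 0‖ₑ) := by
    rw [enorm_mul, enorm_mul, mul_assoc]
    congr 2
    · rw [← ofReal_norm]; simp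
    · rw [← ofReal_norm]; simp [abs_of_pos Real.pi_pos]
  rw [e5] at hnorm
  exact (ENNReal.mul_le_mul_iff_right (by simp) (by simp)).1 hnorm


lemma lint_inv_ball (r : ℝ) (hr : 0 < r) :
    ∫⁻ z in ball (0:ℂ) r, ‖z‖ₑ⁻¹ = ENNReal.ofReal (2 * Real.pi * r) := by
  rw [← lintegral_indicator measurableSet_ball, polar_lint _
    (Measurable.indicator (by fun_prop) measurableSet_ball)]
  have : ∀ s ∈ Set.Ioi (0:ℝ), (∫⁻ t in Set.Ioo (-Real.pi) Real.pi,
      ENNReal.ofReal s * (ball (0:ℂ) r).indicator (fun z => ‖z‖ₑ⁻¹) (s * cis t)) =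
      (Set.Iio r).indicator (fun _ => ENNReal.ofReal (2 * Real.pi)) s := by
    intro s hs
    have hs' : 0 < s := hs
    have e1 : ∀ t, ‖(s:ℂ) * cis t‖ = s := fun t => by
      rw [norm_mul, norm_cis, mul_one, Complex.norm_real, Real.norm_of_nonneg hs'.le]
    have e1' : ∀ t, ‖(s:ℂ) * cis t‖ₑ = ENNReal.ofReal s := fun t => by
      rw [← ofReal_norm, e1]
    have e4 : ENNReal.ofReal s ≠ 0 := by simpa using hs'
    by_cases h : s < r
    · have : ∀ t, ENNReal.ofReal s * (ball (0:ℂ) r).indicator (fun z => ‖z‖ₑ⁻¹) (s * cis t) = 1 := by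
        intro t
        rw [Set.indicator_of_mem (by rw [mem_ball_zero_iff, e1]; exact h), e1',
          ENNReal.mul_inv_cancel e4 (by simp)]
      simp_rw [this]
      rw [Set.indicator_of_mem (by exact h)]
      simp only [lintegral_const, one_mul, Measure.restrict_apply MeasurableSet.univ,
        Set.univ_inter, Real.volume_Ioo]
      congr 1; ring
    · have : ∀ t, ENNReal.ofReal s * (ball (0:ℂ) r).indicator (fun z => ‖z‖ₑ⁻¹) (s * cis t) = 0 := by
        intro t
        rw [Set.indicator_of_notMem (by rw [mem_ball_zero_iff, e1]; exact h), mul_zero]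
      simp_rw [this]
      rw [Set.indicator_of_notMem (by exact h)]
      simp
  rw [setLIntegral_congr_fun measurableSet_Ioi this, lintegral_indicator measurableSet_Iio,
    Measure.restrict_restrict measurableSet_Iio]
  simp only [lintegral_const, Measure.restrict_apply MeasurableSet.univ, Set.univ_inter]
  rw [Set.inter_comm, Set.Ioi_inter_Iio, Real.volume_Ioo, ← ENNReal.ofReal_mul (by positivity)]
  congr 1; ring

lemma lint_inv_ball_at (p : ℂ) (r : ℝ) (hr : 0 < r) :
    ∫⁻ z in ball p r, ‖z - p‖ₑ⁻¹ = ENNReal.ofReal (2 * Real.pi * r) := by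
  rw [← lint_inv_ball r hr, ← lintegral_indicator measurableSet_ball,
    ← lintegral_indicator measurableSet_ball,
    ← lintegral_sub_right_eq_self ((ball (0:ℂ) r).indicator _) p]
  congr 1
  ext z
  simp only [Set.indicator, mem_ball_iff_norm, sub_zero]

lemma dbar_zero_of_notMem {h : ℂ → ℂ} {z : ℂ} (hz : z ∉ tsupport h) : dbar h z = 0 := by
  have : fderiv ℝ h z = 0 := by
    by_contra hne
    exact hz (support_fderiv_subset ℝ hne)
  simp [dbar, this]

lemma hcs_of_subset_ball {h : ℂ → ℂ} {R : ℝ} (hs : tsupport h ⊆ ball (0:ℂ) R) :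
    HasCompactSupport h :=
  isCompact_of_isClosed_isBounded (isClosed_tsupport _) (isBounded_ball.subset hs)

lemma pompeiu_L1 (R : ℝ) (hR : 0 < R) (h : ℂ → ℂ) (hh : ContDiff ℝ 1 h)
    (hs : tsupport h ⊆ ball (0:ℂ) R) :
    ∫⁻ z, ‖h z‖ₑ ≤ ENNReal.ofReal (4 * R) * ∫⁻ z, ‖dbar h z‖ₑ := by
  have hc := hcs_of_subset_ball hs
  have hdb := dbar_continuous hh
  have hpt : ∀ z, ENNReal.ofReal Real.pi * ‖h z‖ₑ ≤ ∫⁻ w, ‖dbar h w‖ₑ * ‖w - z‖ₑ⁻¹ := by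
    intro z
    have h1 := pompeiu0 (fun w => h (w + z)) (hh.comp (contDiff_id.add contDiff_const))
      (hc.comp_homeomorph (Homeomorph.addRight z))
    have h2 : ∀ w, dbar (fun w => h (w + z)) w = dbar h (w + z) := by
      intro w; unfold dbar; rw [fderiv_comp_add_right]
    simp only [zero_add, h2] at h1
    refine h1.trans (le_of_eq ?_)
    rw [← lintegral_add_right_eq_self (fun w => ‖dbar h w‖ₑ * ‖w - z‖ₑ⁻¹) z]
    simp
  have hsupp : ∫⁻ z, ‖h z‖ₑ = ∫⁻ z in ball (0:ℂ) R, ‖h z‖ₑ := by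
    rw [← lintegral_indicator measurableSet_ball]
    congr 1; ext z
    by_cases hz : z ∈ ball (0:ℂ) R
    · rw [Set.indicator_of_mem hz]
    · rw [Set.indicator_of_notMem hz, image_eq_zero_of_notMem_tsupport (fun h' => hz (hs h'))]
      simp
  have hpi : ENNReal.ofReal Real.pi ≠ 0 := by simpa using Real.pi_pos
  rw [← ENNReal.mul_le_mul_iff_right hpi (by simp), hsupp, ← lintegral_const_mul' _ _ (by simp)]
  calc ∫⁻ z in ball (0:ℂ) R, ENNReal.ofReal Real.pi * ‖h z‖ₑ
      ≤ ∫⁻ z in ball (0:ℂ) R, ∫⁻ w, ‖dbar h w‖ₑ * ‖w - z‖ₑ⁻¹ := lintegral_mono fun z => hpt z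
    _ = ∫⁻ w, ∫⁻ z in ball (0:ℂ) R, ‖dbar h w‖ₑ * ‖w - z‖ₑ⁻¹ := by
        rw [lintegral_lintegral_swap]
        refine Measurable.aemeasurable ?_
        unfold Function.uncurry
        fun_prop
    _ ≤ ∫⁻ w, ‖dbar h w‖ₑ * ENNReal.ofReal (4 * Real.pi * R) := by
        refine lintegral_mono fun w => ?_
        simp only []
        rw [lintegral_const_mul _ (by fun_prop)]
        by_cases hw : w ∈ ball (0:ℂ) R
        · gcongr
          calc ∫⁻ z in ball (0:ℂ) R, ‖w - z‖ₑ⁻¹ ≤ ∫⁻ z in ball w (2 * R), ‖w - z‖ₑ⁻¹ := by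
                refine lintegral_mono_set fun z hz => ?_
                rw [mem_ball_zero_iff] at hw hz
                rw [mem_ball_iff_norm]
                have := norm_sub_le z w
                linarith
            _ = ENNReal.ofReal (4 * Real.pi * R) := by
                simp_rw [fun z => enorm_sub_rev w z]
                rw [lint_inv_ball_at w _ (by positivity)]
                congr 1; ring
        · rw [dbar_zero_of_notMem (fun h' => hw (hs h'))]
          simp
    _ = _ := by
        rw [lintegral_mul_const _ (by fun_prop), mul_comm, ← mul_assoc,
          ← ENNReal.ofReal_mul Real.pi_pos.le]
        congr 2; ring


lemma dbar_mul {f g : ℂ → ℂ} {z : ℂ} (hf : DifferentiableAt ℝ f z) (hg : DifferentiableAt ℝ g z) :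
    dbar (fun w => f w * g w) z = dbar f z * g z + f z * dbar g z := by
  unfold dbar
  rw [fderiv_fun_mul hf hg]
  simp
  ring

lemma dbar_holo {f : ℂ → ℂ} {z : ℂ} (hf : DifferentiableAt ℂ f z) : dbar f z = 0 := by
  unfold dbar
  have h1 : fderiv ℝ f z = (fderiv ℂ f z).restrictScalars ℝ :=
    (hf.hasFDerivAt.restrictScalars ℝ).fderiv
  have h2 : fderiv ℂ f z Complex.I = Complex.I * fderiv ℂ f z 1 := by
    have := (fderiv ℂ f z).map_smul Complex.I 1
    simpa using this
  rw [h1]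
  simp only [ContinuousLinearMap.coe_restrictScalars', h2]
  linear_combination (1 / 2 : ℂ) * fderiv ℂ f z 1 * Complex.I_sq

lemma norm_dbar_ofReal_le {η : ℂ → ℝ} {z : ℂ} (hη : DifferentiableAt ℝ η z) :
    ‖dbar (fun w => (η w : ℂ)) z‖ ≤ ‖fderiv ℝ η z‖ := by
  have h1 : fderiv ℝ (fun w => (η w : ℂ)) z = Complex.ofRealCLM.comp (fderiv ℝ η z) :=
    (Complex.ofRealCLM.hasFDerivAt.comp z hη.hasFDerivAt).fderiv
  unfold dbar
  rw [h1]
  simp only [ContinuousLinearMap.comp_apply, Complex.ofRealCLM_apply]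
  have a1 := (fderiv ℝ η z).le_opNorm 1
  have a2 := (fderiv ℝ η z).le_opNorm Complex.I
  simp only [norm_one, Complex.norm_I, mul_one] at a1 a2
  calc _ = (1/2) * ‖((fderiv ℝ η z 1 : ℝ) : ℂ) + Complex.I * ((fderiv ℝ η z Complex.I : ℝ) : ℂ)‖ := by
        rw [norm_mul]; norm_num
    _ ≤ (1/2) * (‖((fderiv ℝ η z 1 : ℝ) : ℂ)‖ + ‖Complex.I * ((fderiv ℝ η z Complex.I : ℝ) : ℂ)‖) := by
        gcongr; exact norm_add_le _ _
    _ ≤ _ := by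
        rw [norm_mul, Complex.norm_I, Complex.norm_real, Complex.norm_real]; linarith

lemma st_deriv_zero {x : ℝ} (hx : x < 0 ∨ 1 < x) : deriv Real.smoothTransition x = 0 := by
  rcases hx with hx | hx
  · have : Real.smoothTransition =ᶠ[nhds x] fun _ => 0 := by
      filter_upwards [Iio_mem_nhds hx] with y hy
      exact Real.smoothTransition.zero_of_nonpos (le_of_lt hy)
    rw [this.deriv_eq]; simp
  · have : Real.smoothTransition =ᶠ[nhds x] fun _ => 1 := by
      filter_upwards [Ioi_mem_nhds hx] with y hy
      exact Real.smoothTransition.one_of_one_le (le_of_lt hy)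
    rw [this.deriv_eq]; simp

lemma st_deriv_bound : ∃ c : ℝ, 0 < c ∧ ∀ x, ‖deriv Real.smoothTransition x‖ ≤ c := by
  have hc : Continuous (deriv Real.smoothTransition) :=
    (Real.smoothTransition.contDiff (n := 1)).continuous_deriv (by norm_num)
  obtain ⟨c, hc⟩ := (isCompact_Icc (a := (0:ℝ)) (b := 1)).exists_bound_of_continuousOn hc.continuousOn
  refine ⟨max c 1, by positivity, fun x => ?_⟩
  by_cases hx : x ∈ Set.Icc (0:ℝ) 1
  · exact (hc x hx).trans (le_max_left _ _)
  · rw [st_deriv_zero]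
    · simp
    · by_contra hcon
      push Not at hcon
      exact hx ⟨hcon.1, hcon.2⟩

lemma ennreal_eps {a b k : ENNReal} (hk : k ≠ ⊤)
    (h : ∀ ε : ℝ, 0 < ε → a ≤ b + k * ENNReal.ofReal ε) : a ≤ b := by
  refine ENNReal.le_of_forall_pos_le_add fun ε hε _ => ?_
  have hk0 : (0:ℝ) < k.toReal + 1 := by positivity
  refine (h (ε / (k.toReal + 1)) (by positivity)).trans ?_
  gcongr
  rw [← ENNReal.ofReal_toReal hk, ← ENNReal.ofReal_mul ENNReal.toReal_nonneg,
    ← ENNReal.ofReal_coe_nnreal]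
  apply ENNReal.ofReal_le_ofReal
  rw [ENNReal.ofReal_toReal hk, mul_div_assoc', div_le_iff₀ hk0]
  nlinarith [ε.coe_nonneg]

/-- The weighted `L¹` inequality for `∂̄`. -/
def Carl (R : ℝ) (c : ENNReal) (U : ℂ → ENNReal) : Prop :=
  ∀ Q : ℂ → ℂ, ContDiff ℝ 1 Q → tsupport Q ⊆ ball (0:ℂ) R →
    ∫⁻ z, ‖Q z‖ₑ * U z ≤ c * ∫⁻ z, ‖dbar Q z‖ₑ * U z

/-- A cutoff vanishing near `p`. -/
def cutp (p : ℂ) (δ : ℝ) (z : ℂ) : ℝ := Real.smoothTransition (2 * ‖z - p‖ ^ 2 / δ ^ 2 - 1)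

lemma cutp_contDiff (p : ℂ) (δ : ℝ) : ContDiff ℝ 1 (cutp p δ) := by
  unfold cutp
  refine (Real.smoothTransition.contDiff (n := 1)).comp ?_
  refine ContDiff.sub (ContDiff.div_const (contDiff_const.mul ?_) _) contDiff_const
  exact (contDiff_id.sub contDiff_const).norm_sq ℝ

lemma cutp_eventually_zero (p : ℂ) {δ : ℝ} (hδ : 0 < δ) : ∀ᶠ z in nhds p, cutp p δ z = 0 := by
  have : ContinuousAt (fun z : ℂ => 2 * ‖z - p‖ ^ 2 / δ ^ 2 - 1) p := by fun_prop
  have h2 := this.eventually_lt (g := fun _ => (0:ℝ)) continuousAt_const (by simp)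
  filter_upwards [h2] with z hz
  exact Real.smoothTransition.zero_of_nonpos hz.le

lemma cutp_one {p : ℂ} {δ : ℝ} (hδ : 0 < δ) {z : ℂ} (hz : δ ≤ ‖z - p‖) : cutp p δ z = 1 := by
  apply Real.smoothTransition.one_of_one_le
  have : 1 ≤ ‖z - p‖ ^ 2 / δ ^ 2 := by
    rw [one_le_div (by positivity)]; gcongr
  rw [mul_div_assoc]; linarith

lemma cutp_deriv {p : ℂ} {δ c : ℝ} (hδ : 0 < δ) (hc : ∀ x, ‖deriv Real.smoothTransition x‖ ≤ c)
    (z : ℂ) : ‖fderiv ℝ (cutp p δ) z‖ ≤ 4 * c / δ ∧ (2 * δ ≤ ‖z - p‖ → fderiv ℝ (cutp p δ) z = 0) := by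
  have hc0 : 0 ≤ c := (norm_nonneg _).trans (hc 0)
  have hin : HasFDerivAt (fun z : ℂ => 2 * ‖z - p‖ ^ 2 / δ ^ 2 - 1)
      ((2 / δ ^ 2) • (2 • (innerSL ℝ (z - p)))) z := by
    have h1 : HasFDerivAt (fun z : ℂ => ‖z - p‖ ^ 2) (2 • (innerSL ℝ (z - p))) z := by
      have := ((hasFDerivAt_id z).sub_const p).norm_sq
      simpa using this
    have h2 := (h1.const_mul (2 / δ ^ 2)).sub_const 1
    refine h2.congr_of_eventuallyEq (Eventually.of_forall fun w => ?_)
    simp only []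
    ring
  have hst : HasDerivAt Real.smoothTransition
      (deriv Real.smoothTransition (2 * ‖z - p‖ ^ 2 / δ ^ 2 - 1)) (2 * ‖z - p‖ ^ 2 / δ ^ 2 - 1) :=
    ((Real.smoothTransition.contDiff (n := 1)).differentiable (by norm_num) _).hasDerivAt
  have hd : fderiv ℝ (cutp p δ) z = _ := (hst.comp_hasFDerivAt z hin).fderiv
  have hz0 : δ < ‖z - p‖ → fderiv ℝ (cutp p δ) z = 0 := by
    intro h
    rw [hd, st_deriv_zero, zero_smul]
    right
    have : 1 < ‖z - p‖ ^ 2 / δ ^ 2 := by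
      rw [one_lt_div (by positivity)]; gcongr
    rw [mul_div_assoc]; linarith
  refine ⟨?_, fun h => hz0 (by linarith)⟩
  by_cases h : δ < ‖z - p‖
  · rw [hz0 h]; simp; positivity
  · rw [hd, norm_smul]
    have : ‖(2 / δ ^ 2) • (2 • (innerSL ℝ (z - p)))‖ ≤ 4 / δ := by
      rw [norm_smul, Real.norm_of_nonneg (by positivity)]
      calc 2 / δ ^ 2 * ‖2 • (innerSL ℝ (z - p))‖ ≤ 2 / δ ^ 2 * (2 * δ) := by
            gcongr
            refine (norm_nsmul_le).trans ?_
            rw [innerSL_apply_norm]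
            push_cast
            linarith
        _ = 4 / δ := by field_simp; ring
    calc _ ≤ c * (4 / δ) := by gcongr; exact hc _
      _ = _ := by ring

lemma carl_step {R : ℝ} {c : ENNReal} (hcT : c ≠ ⊤) {U : ℂ → ENNReal} (hU : Measurable U)
    (hC : Carl R c U) {p : ℂ} (hp : Tendsto U (nhds p) (nhds 0)) :
    Carl R c (fun z => U z * ‖z - p‖ₑ⁻¹) := by
  intro Q hQ hQs
  obtain ⟨k, hk0, hk⟩ := st_deriv_bound
  have hdbQ := dbar_continuous hQ
  obtain ⟨B, hB⟩ := hQ.continuous.bounded_above_of_compact_support (hcs_of_subset_ball hQs)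
  have hB0 : 0 ≤ B := (norm_nonneg _).trans (hB 0)
  set B1 := ∫⁻ z, ‖dbar Q z‖ₑ * (U z * ‖z - p‖ₑ⁻¹) with hB1
  refine ennreal_eps (k := c * ENNReal.ofReal (16 * Real.pi * k * B)) (by finiteness) fun ε hε => ?_
  obtain ⟨δ₀, hδ₀, hball⟩ : ∃ δ₀ > 0, ∀ z ∈ ball p δ₀, U z ≤ ENNReal.ofReal ε := by
    have := hp.eventually (ge_mem_nhds (show 0 < ENNReal.ofReal ε by simpa using hε))
    obtain ⟨d, hd, h⟩ := Metric.eventually_nhds_iff_ball.1 this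
    exact ⟨d, hd, h⟩
  have key : ∀ δ : ℝ, 0 < δ → 2 * δ < δ₀ →
      ∫⁻ z, ‖Q z * (cutp p δ z : ℂ)‖ₑ * (U z * ‖z - p‖ₑ⁻¹) ≤
        c * B1 + c * ENNReal.ofReal (16 * Real.pi * k * B) * ENNReal.ofReal ε := by
    intro δ hδ hδ2
    have hcut := cutp_contDiff p δ
    have hcutC : ContDiff ℝ 1 (fun z => (cutp p δ z : ℂ)) :=
      Complex.ofRealCLM.contDiff.comp hcut
    have hsm : ContDiff ℝ 1 (fun z => Q z * (cutp p δ z : ℂ) * (z - p)⁻¹) := by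
      rw [contDiff_iff_contDiffAt]
      intro z
      by_cases hz : z = p
      · subst hz
        refine (contDiffAt_const (c := (0:ℂ))).congr_of_eventuallyEq ?_
        filter_upwards [cutp_eventually_zero z hδ] with w hw
        simp [hw]
      · exact (hQ.contDiffAt.mul hcutC.contDiffAt).mul
          ((contDiffAt_id.sub contDiffAt_const).inv (sub_ne_zero.2 hz))
    have hts : tsupport (fun z => Q z * (cutp p δ z : ℂ) * (z - p)⁻¹) ⊆ ball (0:ℂ) R := by
      refine (closure_mono ?_).trans hQs
      intro z hz hq
      simp [hq] at hz
    have h1 := hC _ hsm hts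
    have hne : ∀ᵐ z : ℂ, z ≠ p := by
      simp [ae_iff]
    have hL : ∫⁻ z, ‖Q z * (cutp p δ z : ℂ)‖ₑ * (U z * ‖z - p‖ₑ⁻¹) =
        ∫⁻ z, ‖Q z * (cutp p δ z : ℂ) * (z - p)⁻¹‖ₑ * U z := by
      refine lintegral_congr_ae ?_
      filter_upwards [hne] with z hz
      rw [enorm_mul _ (z - p)⁻¹, enorm_inv (sub_ne_zero.2 hz)]
      ring
    rw [hL]
    refine h1.trans ?_
    rw [mul_assoc, ← mul_add]
    gcongr
    calc ∫⁻ z, ‖dbar (fun z => Q z * (cutp p δ z : ℂ) * (z - p)⁻¹) z‖ₑ * U z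
        ≤ ∫⁻ z, (‖dbar Q z‖ₑ * (U z * ‖z - p‖ₑ⁻¹) + (ball p (2 * δ)).indicator (fun z =>
            ENNReal.ofReal B * ENNReal.ofReal (4 * k / δ) * ENNReal.ofReal ε * ‖z - p‖ₑ⁻¹) z) := by
          refine lintegral_mono_ae ?_
          filter_upwards [hne] with z hz
          have hz' := sub_ne_zero.2 hz
          have d1 : DifferentiableAt ℝ Q z := hQ.differentiable (by norm_num) z
          have d2 : DifferentiableAt ℝ (fun z => (cutp p δ z : ℂ)) z :=
            hcutC.differentiable (by norm_num) z
          have d3 : DifferentiableAt ℂ (fun z : ℂ => (z - p)⁻¹) z :=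
            (differentiableAt_id.sub_const p).inv hz'
          rw [dbar_mul (d1.fun_mul d2) (d3.restrictScalars ℝ), dbar_holo d3, mul_zero, add_zero,
            dbar_mul d1 d2, enorm_mul, enorm_inv hz']
          have b1 : ‖(cutp p δ z : ℂ)‖ₑ ≤ 1 := by
            rw [← ofReal_norm, Complex.norm_real, ← ENNReal.ofReal_one]
            apply ENNReal.ofReal_le_ofReal
            rw [Real.norm_of_nonneg (show 0 ≤ cutp p δ z from Real.smoothTransition.nonneg _)]
            exact Real.smoothTransition.le_one _
          have b2 : ‖Q z‖ₑ ≤ ENNReal.ofReal B := by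
            rw [← ofReal_norm]; exact ENNReal.ofReal_le_ofReal (hB z)
          have b3 : ‖Q z‖ₑ * ‖dbar (fun z => (cutp p δ z : ℂ)) z‖ₑ * U z ≤
              (ball p (2 * δ)).indicator (fun z =>
                ENNReal.ofReal B * ENNReal.ofReal (4 * k / δ) * ENNReal.ofReal ε) z := by
            have hn := norm_dbar_ofReal_le (hcut.differentiable (by norm_num) z)
            obtain ⟨c1, c2⟩ := cutp_deriv hδ hk z (p := p)
            by_cases hzb : z ∈ ball p (2 * δ)
            · rw [Set.indicator_of_mem hzb]
              gcongr
              · rw [← ofReal_norm]; exact ENNReal.ofReal_le_ofReal (hn.trans c1)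
              · exact hball z (ball_subset_ball hδ2.le hzb)
            · rw [Set.indicator_of_notMem hzb]
              rw [mem_ball_iff_norm, not_lt] at hzb
              rw [c2 hzb, norm_zero] at hn
              have : dbar (fun z => (cutp p δ z : ℂ)) z = 0 := norm_le_zero_iff.1 hn
              simp [this]
          calc _ ≤ (‖dbar Q z‖ₑ * ‖(cutp p δ z : ℂ)‖ₑ + ‖Q z‖ₑ * ‖dbar (fun z => (cutp p δ z : ℂ)) z‖ₑ)
                  * ‖z - p‖ₑ⁻¹ * U z := by
                gcongr
                refine (enorm_add_le _ _).trans ?_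
                rw [enorm_mul, enorm_mul]
            _ = ‖dbar Q z‖ₑ * ‖(cutp p δ z : ℂ)‖ₑ * (U z * ‖z - p‖ₑ⁻¹) +
                  (‖Q z‖ₑ * ‖dbar (fun z => (cutp p δ z : ℂ)) z‖ₑ * U z) * ‖z - p‖ₑ⁻¹ := by ring
            _ ≤ ‖dbar Q z‖ₑ * 1 * (U z * ‖z - p‖ₑ⁻¹) +
                  ((ball p (2 * δ)).indicator (fun z =>
                    ENNReal.ofReal B * ENNReal.ofReal (4 * k / δ) * ENNReal.ofReal ε) z) * ‖z - p‖ₑ⁻¹ := by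
                exact add_le_add (by gcongr) (mul_le_mul_left b3 _)
            _ = _ := by
                rw [mul_one]
                congr 1
                by_cases hzb : z ∈ ball p (2 * δ)
                · rw [Set.indicator_of_mem hzb, Set.indicator_of_mem hzb]
                · rw [Set.indicator_of_notMem hzb, Set.indicator_of_notMem hzb, zero_mul]
      _ = B1 + ENNReal.ofReal B * ENNReal.ofReal (4 * k / δ) * ENNReal.ofReal ε *
            ENNReal.ofReal (2 * Real.pi * (2 * δ)) := by
          rw [lintegral_add_left (by fun_prop), lintegral_indicator measurableSet_ball,
            lintegral_const_mul _ (by fun_prop), lint_inv_ball_at _ _ (by positivity)]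
      _ = _ := by
          congr 1
          rw [← ENNReal.ofReal_mul (by positivity), ← ENNReal.ofReal_mul (by positivity),
            ← ENNReal.ofReal_mul (by positivity), ← ENNReal.ofReal_mul (by positivity)]
          congr 1
          field_simp
          ring
  -- Fatou
  let d : ℕ → ℝ := fun n => δ₀ / 4 / (n + 1)
  have hd0 : ∀ n, 0 < d n := fun n => by positivity
  have hd1 : ∀ n, 2 * d n < δ₀ := fun n => by
    have : d n ≤ δ₀ / 4 := div_le_self (by positivity) (by linarith [n.cast_nonneg (α := ℝ)])
    linarith
  have hdt : Tendsto d atTop (nhds 0) := by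
    have := (tendsto_one_div_add_atTop_nhds_zero_nat (𝕜 := ℝ)).const_mul (δ₀ / 4)
    simpa [d, div_eq_mul_inv] using this
  have hfat : ∫⁻ z, ‖Q z‖ₑ * (U z * ‖z - p‖ₑ⁻¹) ≤
      ∫⁻ z, liminf (fun n => ‖Q z * (cutp p (d n) z : ℂ)‖ₑ * (U z * ‖z - p‖ₑ⁻¹)) atTop := by
    refine lintegral_mono_ae ?_
    have hne : ∀ᵐ z : ℂ, z ≠ p := by
      simp [ae_iff]
    filter_upwards [hne] with z hz
    have hz' : 0 < ‖z - p‖ := norm_pos_iff.2 (sub_ne_zero.2 hz)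
    have : Tendsto (fun n => ‖Q z * (cutp p (d n) z : ℂ)‖ₑ * (U z * ‖z - p‖ₑ⁻¹)) atTop
        (nhds (‖Q z‖ₑ * (U z * ‖z - p‖ₑ⁻¹))) := by
      refine tendsto_const_nhds.congr' ?_
      filter_upwards [hdt.eventually (gt_mem_nhds hz')] with n hn
      rw [cutp_one (hd0 n) hn.le]; simp
    rw [this.liminf_eq]
  refine hfat.trans ((lintegral_liminf_le fun n => ?_).trans ?_)
  · have := (cutp_contDiff p (d n)).continuous
    have := hQ.continuous
    fun_prop
  · refine (liminf_le_liminf (v := fun _ => c * B1 + c * ENNReal.ofReal (16 * Real.pi * k * B) * ENNReal.ofReal ε)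
      (Eventually.of_forall fun n => key (d n) (hd0 n) (hd1 n))).trans ?_
    simp

lemma carl_finset {R : ℝ} {c : ENNReal} (hcT : c ≠ ⊤) {W : ℂ → ENNReal} (hW : Measurable W)
    (hC : Carl R c W) (S : Finset ℂ) (hS : ∀ p ∈ S, Tendsto W (nhds p) (nhds 0)) :
    Carl R c (fun z => W z * ‖∏ q ∈ S, (z - q)‖ₑ⁻¹) := by
  classical
  induction S using Finset.induction_on with
  | empty => simpa using hC
  | insert p S hp ih =>
    have ih' := ih fun q hq => hS q (Finset.mem_insert_of_mem hq)
    have hWp := hS p (Finset.mem_insert_self _ _)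
    have hcont : Continuous fun z : ℂ => ∏ q ∈ S, (z - q) := by fun_prop
    have hprod : ∏ q ∈ S, (p - q) ≠ 0 :=
      Finset.prod_ne_zero_iff.2 fun q hq => sub_ne_zero.2 (by rintro rfl; exact hp hq)
    have ht : Tendsto (fun z => W z * ‖∏ q ∈ S, (z - q)‖ₑ⁻¹) (nhds p) (nhds 0) := by
      have h1 : Tendsto (fun z : ℂ => ‖∏ q ∈ S, (z - q)‖ₑ⁻¹) (nhds p)
          (nhds (‖∏ q ∈ S, (p - q)‖ₑ⁻¹)) :=
        tendsto_inv_iff.2 (hcont.enorm.tendsto p)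
      have h2 := ENNReal.Tendsto.mul hWp (Or.inr (by simpa using hprod)) h1 (Or.inr (by simp))
      simpa using h2
    have h := carl_step hcT (by fun_prop) ih' ht
    convert h using 2 with z
    rw [Finset.prod_insert hp, enorm_mul, ENNReal.mul_inv (by simp) (by simp)]
    ring

lemma carl_final {R : ℝ} (hR : 0 < R) {c : ENNReal} (hcT : c ≠ ⊤) {W : ℂ → ENNReal}
    (hW : Measurable W) (hC : Carl R c W)
    (hbd : ∃ B : ℝ, ∀ z ∈ ball (0:ℂ) R, W z ≤ ENNReal.ofReal B)
    (hinf : ∀ N : ℕ, ∃ S : Finset ℂ, S.card = N ∧ ∀ p ∈ S, ‖p‖ < R / 8 ∧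
      Tendsto W (nhds p) (nhds 0)) :
    ∫⁻ z in ball (0:ℂ) (R / 8), W z = 0 := by
  let χ : ContDiffBump (0:ℂ) := ⟨R / 2, 3 * R / 4, by positivity, by linarith⟩
  have hχ : ContDiff ℝ 1 (fun z => ((χ z : ℝ) : ℂ)) := Complex.ofRealCLM.contDiff.comp χ.contDiff
  have hts0 : tsupport (fun z => ((χ z : ℝ) : ℂ)) ⊆ closedBall (0:ℂ) (3 * R / 4) := by
    refine (closure_mono ?_).trans χ.tsupport_eq.subset
    intro z hz hq
    simp [hq] at hz
  have hts : tsupport (fun z => ((χ z : ℝ) : ℂ)) ⊆ ball (0:ℂ) R :=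
    hts0.trans (closedBall_subset_ball (by linarith))
  have hdb := dbar_continuous hχ
  set D := ∫⁻ z, ‖dbar (fun z => ((χ z : ℝ) : ℂ)) z‖ₑ * W z with hD
  have hDfin : D ≠ ⊤ := by
    obtain ⟨B, hB⟩ := hbd
    obtain ⟨B', hB'⟩ := (isCompact_closedBall (0:ℂ) R).exists_bound_of_continuousOn hdb.continuousOn
    refine ne_top_of_le_ne_top (b := ∫⁻ z in ball (0:ℂ) R, ENNReal.ofReal B' * ENNReal.ofReal B) ?_ ?_
    · rw [setLIntegral_const]
      have := (measure_ball_lt_top (μ := (volume : Measure ℂ)) (x := 0) (r := R)).ne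
      finiteness
    · rw [← lintegral_indicator measurableSet_ball]
      refine lintegral_mono fun z => ?_
      by_cases hz : z ∈ ball (0:ℂ) R
      · rw [Set.indicator_of_mem hz]
        gcongr
        · rw [← ofReal_norm]; exact ENNReal.ofReal_le_ofReal (hB' z (ball_subset_closedBall hz))
        · exact hB z hz
      · simp [dbar_zero_of_notMem (fun h => hz (hts h))]
  have main : ∀ N : ℕ, ∫⁻ z in ball (0:ℂ) (R / 8), W z ≤ c * D * (ENNReal.ofReal (2 / 3)) ^ N := by
    intro N
    obtain ⟨S, hSN, hS⟩ := hinf N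
    have h := carl_finset hcT hW hC S (fun p hp => (hS p hp).2) _ hχ hts
    have l1 : (∫⁻ z in ball (0:ℂ) (R / 8), W z) * (ENNReal.ofReal ((R / 4) ^ N))⁻¹ ≤
        ∫⁻ z, ‖((χ z : ℝ) : ℂ)‖ₑ * (W z * ‖∏ q ∈ S, (z - q)‖ₑ⁻¹) := by
      rw [← lintegral_mul_const _ hW, ← lintegral_indicator measurableSet_ball]
      refine lintegral_mono fun z => ?_
      by_cases hz : z ∈ ball (0:ℂ) (R / 8)
      · rw [Set.indicator_of_mem hz]
        rw [mem_ball_zero_iff] at hz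
        have : χ z = 1 := χ.one_of_mem_closedBall (by
          rw [mem_closedBall_zero_iff]; change ‖z‖ ≤ R / 2; linarith)
        rw [this]
        simp only [Complex.ofReal_one, enorm_one, one_mul]
        gcongr
        rw [← ofReal_norm]
        apply ENNReal.ofReal_le_ofReal
        rw [norm_prod, ← hSN, ← Finset.prod_const]
        refine Finset.prod_le_prod (fun _ _ => norm_nonneg _) fun q hq => ?_
        have := norm_sub_le z q
        have := (hS q hq).1
        linarith
      · rw [Set.indicator_of_notMem hz]; exact zero_le
    have l2 : ∫⁻ z, ‖dbar (fun z => ((χ z : ℝ) : ℂ)) z‖ₑ * (W z * ‖∏ q ∈ S, (z - q)‖ₑ⁻¹) ≤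
        D * (ENNReal.ofReal ((3 * R / 8) ^ N))⁻¹ := by
      rw [hD, ← lintegral_mul_const _ (by fun_prop)]
      refine lintegral_mono fun z => ?_
      simp only []
      by_cases hz : z ∈ ball (0:ℂ) (R / 2)
      · have : dbar (fun z => ((χ z : ℝ) : ℂ)) z = 0 := by
          have he : (fun z => ((χ z : ℝ) : ℂ)) =ᶠ[nhds z] fun _ => 1 := by
            filter_upwards [isOpen_ball.mem_nhds hz] with w hw
            rw [χ.one_of_mem_closedBall (ball_subset_closedBall hw)]; simp
          unfold dbar
          rw [he.fderiv_eq]; simp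
        simp [this]
      · rw [mul_assoc]
        gcongr
        rw [← ofReal_norm]
        apply ENNReal.ofReal_le_ofReal
        rw [norm_prod, ← hSN, ← Finset.prod_const]
        refine Finset.prod_le_prod (fun _ _ => by positivity) fun q hq => ?_
        rw [mem_ball_zero_iff, not_lt] at hz
        have := norm_sub_norm_le z q
        have := (hS q hq).1
        linarith
    have l3 := l1.trans (h.trans (mul_le_mul_right l2 c))
    have ex : ENNReal.ofReal ((R / 4) ^ N) ≠ 0 := by
      have : 0 < (R / 4) ^ N := by positivity
      simpa using this
    rw [← div_eq_mul_inv, ENNReal.div_le_iff ex (by simp)] at l3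
    refine l3.trans (le_of_eq ?_)
    rw [mul_assoc, mul_assoc, mul_assoc]
    congr 2
    rw [← ENNReal.ofReal_inv_of_pos (by positivity), ← ENNReal.ofReal_mul (by positivity),
      ← ENNReal.ofReal_pow (by norm_num)]
    congr 1
    rw [← inv_pow, ← mul_pow]
    congr 1
    field_simp
    norm_num
  have hlim : Tendsto (fun N : ℕ => c * D * (ENNReal.ofReal (2 / 3)) ^ N) atTop (nhds (c * D * 0)) :=
    ENNReal.Tendsto.const_mul (ENNReal.tendsto_pow_atTop_nhds_zero_of_lt_one (by
      rw [ENNReal.ofReal_lt_one]; norm_num)) (Or.inr (by finiteness))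
  rw [mul_zero] at hlim
  exact le_antisymm (ge_of_tendsto' hlim main) zero_le


/-- Truncation near the common zero set of `f` and `g`. -/
def trunc (f g : ℂ → ℂ) (ρ : ℝ) (z : ℂ) : ℝ :=
  Real.smoothTransition (8 * (‖f z‖ ^ 2 + ‖g z‖ ^ 2) / ρ ^ 2 - 1)

lemma trunc_nonneg (f g : ℂ → ℂ) (ρ : ℝ) (z : ℂ) : 0 ≤ trunc f g ρ z :=
  Real.smoothTransition.nonneg _

lemma trunc_le_one (f g : ℂ → ℂ) (ρ : ℝ) (z : ℂ) : trunc f g ρ z ≤ 1 :=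
  Real.smoothTransition.le_one _

lemma trunc_one {f g : ℂ → ℂ} {ρ : ℝ} (hρ : 0 < ρ) {z : ℂ} (h : ρ ≤ ‖f z‖ + ‖g z‖) :
    trunc f g ρ z = 1 := by
  apply Real.smoothTransition.one_of_one_le
  have h1 : ρ ^ 2 ≤ (‖f z‖ + ‖g z‖) ^ 2 := by gcongr
  have : 4 ≤ 8 * (‖f z‖ ^ 2 + ‖g z‖ ^ 2) / ρ ^ 2 := by
    rw [le_div_iff₀ (by positivity)]
    nlinarith [sq_nonneg (‖f z‖ - ‖g z‖)]
  linarith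

lemma trunc_eventually_zero {f g : ℂ → ℂ} {ρ : ℝ} {z : ℂ} (hf : ContinuousAt f z)
    (hg : ContinuousAt g z) (hf0 : f z = 0) (hg0 : g z = 0) :
    ∀ᶠ w in nhds z, trunc f g ρ w = 0 := by
  have : ContinuousAt (fun z : ℂ => 8 * (‖f z‖ ^ 2 + ‖g z‖ ^ 2) / ρ ^ 2 - 1) z := by fun_prop
  have h2 := this.eventually_lt (g := fun _ => (0:ℝ)) continuousAt_const (by simp [hf0, hg0])
  filter_upwards [h2] with z hz
  exact Real.smoothTransition.zero_of_nonpos hz.le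

lemma trunc_contDiffAt {f g : ℂ → ℂ} {ρ : ℝ} {z : ℂ} (hf : ContDiffAt ℝ 1 f z)
    (hg : ContDiffAt ℝ 1 g z) : ContDiffAt ℝ 1 (trunc f g ρ) z := by
  unfold trunc
  refine ((Real.smoothTransition.contDiff (n := 1)).contDiffAt).comp z ?_
  refine ContDiffAt.sub (ContDiffAt.div_const (contDiffAt_const.mul ?_) _) contDiffAt_const
  exact (hf.norm_sq ℝ).add (hg.norm_sq ℝ)

lemma trunc_deriv {f g : ℂ → ℂ} {ρ k : ℝ} (hρ : 0 < ρ)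
    (hk : ∀ x, ‖deriv Real.smoothTransition x‖ ≤ k) {z : ℂ}
    (hf : DifferentiableAt ℝ f z) (hg : DifferentiableAt ℝ g z) :
    ‖fderiv ℝ (trunc f g ρ) z‖ * (‖f z‖ + ‖g z‖) ≤ 16 * k * (‖fderiv ℝ f z‖ + ‖fderiv ℝ g z‖) ∧
    (ρ ≤ ‖f z‖ + ‖g z‖ → fderiv ℝ (trunc f g ρ) z = 0) := by
  have hk0 : 0 ≤ k := (norm_nonneg _).trans (hk 0)
  have h1 := (hf.hasFDerivAt.norm_sq).add (hg.hasFDerivAt.norm_sq)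
  have hin : HasFDerivAt (fun z : ℂ => 8 * (‖f z‖ ^ 2 + ‖g z‖ ^ 2) / ρ ^ 2 - 1)
      ((8 / ρ ^ 2) • (2 • ((innerSL ℝ (f z) : ℂ →L[ℝ] ℝ).comp (fderiv ℝ f z)) +
        2 • ((innerSL ℝ (g z) : ℂ →L[ℝ] ℝ).comp (fderiv ℝ g z)))) z := by
    have h2 := (h1.const_mul (8 / ρ ^ 2)).sub_const 1
    refine h2.congr_of_eventuallyEq (Eventually.of_forall fun w => ?_)
    simp only [Pi.add_apply]
    ring
  have hst : HasDerivAt Real.smoothTransition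
      (deriv Real.smoothTransition (8 * (‖f z‖ ^ 2 + ‖g z‖ ^ 2) / ρ ^ 2 - 1))
        (8 * (‖f z‖ ^ 2 + ‖g z‖ ^ 2) / ρ ^ 2 - 1) :=
    ((Real.smoothTransition.contDiff (n := 1)).differentiable (by norm_num) _).hasDerivAt
  have hd : fderiv ℝ (trunc f g ρ) z = _ := (hst.comp_hasFDerivAt z hin).fderiv
  have hz0 : ρ ≤ ‖f z‖ + ‖g z‖ → fderiv ℝ (trunc f g ρ) z = 0 := by
    intro h
    rw [hd, st_deriv_zero, zero_smul]
    right
    have h1 : ρ ^ 2 ≤ (‖f z‖ + ‖g z‖) ^ 2 := by gcongr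
    have : 4 ≤ 8 * (‖f z‖ ^ 2 + ‖g z‖ ^ 2) / ρ ^ 2 := by
      rw [le_div_iff₀ (by positivity)]
      nlinarith [sq_nonneg (‖f z‖ - ‖g z‖)]
    linarith
  refine ⟨?_, hz0⟩
  by_cases h : ρ ≤ ‖f z‖ + ‖g z‖
  · rw [hz0 h]; simp; positivity
  · push Not at h
    set a := ‖f z‖ with ha
    set b := ‖g z‖ with hb
    set a' := ‖fderiv ℝ f z‖ with ha'
    set b' := ‖fderiv ℝ g z‖ with hb'
    have ha0 : 0 ≤ a := norm_nonneg _
    have hb0 : 0 ≤ b := norm_nonneg _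
    have ha0' : 0 ≤ a' := norm_nonneg _
    have hb0' : 0 ≤ b' := norm_nonneg _
    have hone : ∀ u : ℂ, ∀ L : ℂ →L[ℝ] ℂ, ‖2 • ((innerSL ℝ u : ℂ →L[ℝ] ℝ).comp L)‖ ≤ 2 * (‖u‖ * ‖L‖) := by
      intro u L
      refine (norm_nsmul_le).trans ?_
      have := ContinuousLinearMap.opNorm_comp_le (innerSL ℝ u : ℂ →L[ℝ] ℝ) L
      rw [innerSL_apply_norm] at this
      push_cast
      linarith
    have hbd : ‖fderiv ℝ (trunc f g ρ) z‖ ≤ k * (8 / ρ ^ 2 * (2 * (a * a') + 2 * (b * b'))) := by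
      rw [hd, norm_smul, norm_smul, Real.norm_of_nonneg (show 0 ≤ 8 / ρ ^ 2 by positivity)]
      gcongr
      · exact hk _
      · exact (norm_add_le _ _).trans (add_le_add (hone _ _) (hone _ _))
    calc _ ≤ k * (8 / ρ ^ 2 * (2 * (a * a') + 2 * (b * b'))) * (a + b) := by gcongr
      _ ≤ k * (8 / ρ ^ 2 * (2 * ((a + b) * (a' + b')))) * (a + b) := by
          gcongr
          nlinarith [mul_nonneg ha0 hb0', mul_nonneg hb0 ha0']
      _ = 16 * k * (a' + b') * ((a + b) ^ 2 / ρ ^ 2) := by ring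
      _ ≤ 16 * k * (a' + b') * 1 := by
          gcongr
          rw [div_le_one (by positivity)]
          gcongr
      _ = _ := by ring

/-- The set where the truncation is active. -/
def lowSet (f g : ℂ → ℂ) (ρ : ℝ) : Set ℂ :=
  {z : ℂ | ‖z‖ ≤ 3 / 4 ∧ 0 < ‖f z‖ + ‖g z‖ ∧ ‖f z‖ + ‖g z‖ < ρ}

lemma trunc_pointwise {f g Q : ℂ → ℂ} {X : ℂ → ℝ} {M B ρ ε k : ℝ} {z : ℂ} (hρ : 0 < ρ) (hε : 0 < ε)
    (hk : ∀ x, ‖deriv Real.smoothTransition x‖ ≤ k)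
    (hz : ‖z‖ ≤ 3 / 4) (hpos : 0 < ‖f z‖ + ‖g z‖)
    (hf : ContDiffAt ℝ 1 f z) (hg : ContDiffAt ℝ 1 g z) (hQ : DifferentiableAt ℝ Q z)
    (hQB : ‖Q z‖ ≤ B)
    (hsys : ‖dbar f z‖ + ‖dbar g z‖ ≤ M * (‖f z‖ + ‖g z‖))
    (hX : (‖fderiv ℝ f z‖ + ‖fderiv ℝ g z‖) ^ 2 ≤ X z) :
    ‖dbar (fun w => Q w * (trunc f g ρ w : ℂ) * f w) z‖ +
      ‖dbar (fun w => Q w * (trunc f g ρ w : ℂ) * g w) z‖ ≤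
    ‖dbar Q z‖ * (‖f z‖ + ‖g z‖) + M * (‖Q z‖ * (‖f z‖ + ‖g z‖)) +
      (lowSet f g ρ).indicator (fun z => 16 * k * B * (ε + X z / ε)) z := by
  have hk0 : 0 ≤ k := (norm_nonneg _).trans (hk 0)
  have hB0 : 0 ≤ B := (norm_nonneg _).trans hQB
  have df : DifferentiableAt ℝ f z := hf.differentiableAt (by norm_num)
  have dg : DifferentiableAt ℝ g z := hg.differentiableAt (by norm_num)
  have dt : DifferentiableAt ℝ (trunc f g ρ) z := (trunc_contDiffAt hf hg).differentiableAt (by norm_num)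
  have dtC : DifferentiableAt ℝ (fun w => (trunc f g ρ w : ℂ)) z :=
    Complex.ofRealCLM.differentiableAt.comp z dt
  obtain ⟨t1, t2⟩ := trunc_deriv hρ hk df dg (ρ := ρ)
  have t3 := norm_dbar_ofReal_le dt
  have gen : ∀ u : ℂ → ℂ, DifferentiableAt ℝ u z →
      ‖dbar (fun w => Q w * (trunc f g ρ w : ℂ) * u w) z‖ ≤
      ‖dbar Q z‖ * ‖u z‖ + ‖Q z‖ * ‖dbar u z‖ + ‖Q z‖ * (‖fderiv ℝ (trunc f g ρ) z‖ * ‖u z‖) := by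
    intro u hu
    rw [dbar_mul (hQ.fun_mul dtC) hu, dbar_mul hQ dtC]
    have nt : ‖(trunc f g ρ z : ℂ)‖ ≤ 1 := by
      rw [Complex.norm_real, Real.norm_of_nonneg (trunc_nonneg _ _ _ _)]
      exact trunc_le_one _ _ _ _
    calc _ ≤ (‖dbar Q z‖ * ‖(trunc f g ρ z : ℂ)‖ + ‖Q z‖ * ‖dbar (fun w => (trunc f g ρ w : ℂ)) z‖) * ‖u z‖
          + ‖Q z‖ * ‖(trunc f g ρ z : ℂ)‖ * ‖dbar u z‖ := by
          refine (norm_add_le _ _).trans ?_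
          rw [norm_mul, norm_mul, norm_mul]
          gcongr
          refine (norm_add_le _ _).trans ?_
          rw [norm_mul, norm_mul]
      _ ≤ (‖dbar Q z‖ * 1 + ‖Q z‖ * ‖fderiv ℝ (trunc f g ρ) z‖) * ‖u z‖
          + ‖Q z‖ * 1 * ‖dbar u z‖ := by gcongr
      _ = _ := by ring
  have e1 := gen f df
  have e2 := gen g dg
  have e3 : ‖Q z‖ * (‖dbar f z‖ + ‖dbar g z‖) ≤ ‖Q z‖ * (M * (‖f z‖ + ‖g z‖)) := by gcongr
  have e4 : ‖Q z‖ * (‖fderiv ℝ (trunc f g ρ) z‖ * (‖f z‖ + ‖g z‖)) ≤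
      (lowSet f g ρ).indicator (fun z => 16 * k * B * (ε + X z / ε)) z := by
    by_cases h : ρ ≤ ‖f z‖ + ‖g z‖
    · rw [t2 h, Set.indicator_of_notMem (fun h' => absurd h'.2.2 (not_lt.2 h))]
      simp
    · rw [Set.indicator_of_mem (show z ∈ lowSet f g ρ from ⟨hz, hpos, not_le.1 h⟩)]
      set Y := ‖fderiv ℝ f z‖ + ‖fderiv ℝ g z‖ with hY
      have hY0 : 0 ≤ Y := by positivity
      have : Y ≤ ε + X z / ε := by
        have h5 : Y ≤ ε + Y ^ 2 / ε := by
          rw [← sub_le_iff_le_add', le_div_iff₀ hε]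
          nlinarith [sq_nonneg (Y - ε)]
        have : Y ^ 2 / ε ≤ X z / ε := by gcongr
        linarith
      calc _ ≤ B * (16 * k * Y) := by gcongr
        _ ≤ B * (16 * k * (ε + X z / ε)) := by gcongr
        _ = _ := by ring
  nlinarith [e1, e2, e3, e4]

lemma carl_of_system {f g : ℂ → ℂ} {K : Set ℂ} {X : ℂ → ℝ} {M R : ℝ}
    (hK : K = {z : ℂ | z ∈ ball (0:ℂ) 1 ∧ f z = 0 ∧ g z = 0})
    (hf : ContinuousOn f (ball (0:ℂ) 1)) (hg : ContinuousOn g (ball (0:ℂ) 1))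
    (hfs : ∀ z ∈ ball (0:ℂ) 1 \ K, ContDiffAt ℝ 1 f z)
    (hgs : ∀ z ∈ ball (0:ℂ) 1 \ K, ContDiffAt ℝ 1 g z)
    (hM : 0 ≤ M)
    (hsys : ∀ z ∈ ball (0:ℂ) 1 \ K, ‖dbar f z‖ + ‖dbar g z‖ ≤ M * (‖f z‖ + ‖g z‖))
    (hX : ∀ z ∈ ball (0:ℂ) 1 \ K, (‖fderiv ℝ f z‖ + ‖fderiv ℝ g z‖) ^ 2 ≤ X z)
    (hlow : ∀ ε : ℝ, 0 < ε → ∃ ρ : ℝ, 0 < ρ ∧ ρ ≤ ε ∧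
      ∫⁻ z in lowSet f g ρ, ENNReal.ofReal (X z) ≤ ENNReal.ofReal ε)
    (hR : 0 < R) (hR1 : R ≤ 3 / 4) (hRM : 4 * R * M ≤ 1 / 2) :
    Carl R (ENNReal.ofReal (8 * R))
      ((ball (0:ℂ) 1).indicator (fun z => ENNReal.ofReal (‖f z‖ + ‖g z‖))) := by
  classical
  intro Q hQ hQs
  set W := (ball (0:ℂ) 1).indicator (fun z => ENNReal.ofReal (‖f z‖ + ‖g z‖)) with hW
  have hWc : ContinuousOn (fun z => ENNReal.ofReal (‖f z‖ + ‖g z‖)) (ball (0:ℂ) 1) :=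
    ENNReal.continuous_ofReal.comp_continuousOn (hf.norm.add hg.norm)
  have hWm : Measurable W := by
    classical
    have := hWc.measurable_piecewise (g := fun _ => (0:ENNReal)) continuousOn_const measurableSet_ball
    rw [hW, ← Set.piecewise_eq_indicator]
    exact this
  have hQs1 : tsupport Q ⊆ ball (0:ℂ) 1 := hQs.trans (ball_subset_ball (by linarith))
  have hcQ := hcs_of_subset_ball hQs
  have hdbQ := dbar_continuous hQ
  have hQc := hQ.continuous
  obtain ⟨k, hk0, hk⟩ := st_deriv_bound
  obtain ⟨B, hB⟩ := hQ.continuous.bounded_above_of_compact_support hcQ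
  have hB0 : 0 ≤ B := (norm_nonneg _).trans (hB 0)
  set A := ∫⁻ z, ‖Q z‖ₑ * W z with hA
  set D := ∫⁻ z, ‖dbar Q z‖ₑ * W z with hD
  have hq : ∫⁻ z, ‖Q z‖ₑ ≠ ⊤ := (hQ.continuous.integrable_of_hasCompactSupport hcQ).2.ne
  have hAfin : A ≠ ⊤ := by
    obtain ⟨B', hB'⟩ := hcQ.isCompact.exists_bound_of_continuousOn ((hf.norm.add hg.norm).mono hQs1)
    refine ne_top_of_le_ne_top (b := ∫⁻ z, ‖Q z‖ₑ * ENNReal.ofReal B') ?_ ?_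
    · rw [lintegral_mul_const _ (by fun_prop)]; finiteness
    · refine lintegral_mono fun z => ?_
      by_cases hz : z ∈ tsupport Q
      · simp only []
        gcongr
        rw [hW, Set.indicator_of_mem (hQs1 hz)]
        exact ENNReal.ofReal_le_ofReal ((Real.le_norm_self _).trans (hB' z hz))
      · simp [image_eq_zero_of_notMem_tsupport hz]
  have step : A ≤ ENNReal.ofReal (4 * R) * (D + ENNReal.ofReal M * A) := by
    set V := volume (closedBall (0:ℂ) (3 / 4)) with hV
    have hVfin : V ≠ ⊤ := (measure_closedBall_lt_top).ne
    refine ennreal_eps (k := ENNReal.ofReal (4 * R) * (ENNReal.ofReal (16 * k * B) * (V + 1)) +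
      ∫⁻ z, ‖Q z‖ₑ) (by finiteness) fun ε hε => ?_
    obtain ⟨ρ, hρ, hρε, hI⟩ := hlow (ε ^ 2 ⊓ ε) (by positivity)
    have hρε' : ρ ≤ ε := hρε.trans inf_le_right
    have hI' : ∫⁻ z in lowSet f g ρ, ENNReal.ofReal (X z) ≤ ENNReal.ofReal (ε ^ 2) :=
      hI.trans (ENNReal.ofReal_le_ofReal inf_le_left)
    -- the truncated functions
    have smooth : ∀ u : ℂ → ℂ, (∀ z ∈ ball (0:ℂ) 1 \ K, ContDiffAt ℝ 1 u z) →
        ContDiff ℝ 1 (fun w => Q w * (trunc f g ρ w : ℂ) * u w) := by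
      intro u hu
      rw [contDiff_iff_contDiffAt]
      intro z
      by_cases hz : z ∈ tsupport Q
      · have hz1 := hQs1 hz
        by_cases hzK : z ∈ K
        · have hzK' := hzK
          rw [hK] at hzK'
          refine (contDiffAt_const (c := (0:ℂ))).congr_of_eventuallyEq ?_
          filter_upwards [trunc_eventually_zero (ρ := ρ)
            (hf.continuousAt (isOpen_ball.mem_nhds hz1)) (hg.continuousAt (isOpen_ball.mem_nhds hz1))
            hzK'.2.1 hzK'.2.2] with w hw
          simp [hw]
        · have hzd : z ∈ ball (0:ℂ) 1 \ K := ⟨hz1, hzK⟩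
          refine (hQ.contDiffAt.mul ?_).mul (hu z hzd)
          exact Complex.ofRealCLM.contDiff.contDiffAt.comp z (trunc_contDiffAt (hfs z hzd) (hgs z hzd))
      · refine (contDiffAt_const (c := (0:ℂ))).congr_of_eventuallyEq ?_
        filter_upwards [(isClosed_tsupport Q).isOpen_compl.mem_nhds hz] with w hw
        simp [image_eq_zero_of_notMem_tsupport hw]
    have supp : ∀ u : ℂ → ℂ, tsupport (fun w => Q w * (trunc f g ρ w : ℂ) * u w) ⊆ tsupport Q := by
      intro u
      refine closure_mono ?_
      intro z hz hq
      simp [hq] at hz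
    set F := fun w => Q w * (trunc f g ρ w : ℂ) * f w with hF
    set G := fun w => Q w * (trunc f g ρ w : ℂ) * g w with hG
    have sF : ContDiff ℝ 1 F := smooth f hfs
    have sG : ContDiff ℝ 1 G := smooth g hgs
    have cF := sF.continuous
    have cG := sG.continuous
    have dF := dbar_continuous sF
    have dG := dbar_continuous sG
    have pF := pompeiu_L1 R hR F sF ((supp f).trans hQs)
    have pG := pompeiu_L1 R hR G sG ((supp g).trans hQs)
    have lower : A ≤ ((∫⁻ z, ‖F z‖ₑ) + (∫⁻ z, ‖G z‖ₑ)) + ENNReal.ofReal ε * ∫⁻ z, ‖Q z‖ₑ := by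
      rw [← lintegral_add_left (by fun_prop), ← lintegral_const_mul _ (by fun_prop),
        ← lintegral_add_left (by fun_prop)]
      refine lintegral_mono fun z => ?_
      simp only []
      by_cases hz : z ∈ tsupport Q
      · rw [hW, Set.indicator_of_mem (hQs1 hz)]
        by_cases hr : ρ ≤ ‖f z‖ + ‖g z‖
        · refine le_add_right (le_of_eq ?_)
          simp only [hF, hG, trunc_one hρ hr]
          rw [ENNReal.ofReal_add (norm_nonneg _) (norm_nonneg _), ofReal_norm, ofReal_norm]
          simp [mul_add]
        · refine le_add_left ?_
          rw [mul_comm]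
          gcongr
          linarith
      · simp [image_eq_zero_of_notMem_tsupport hz]
    have upper : (∫⁻ z, ‖dbar F z‖ₑ) + (∫⁻ z, ‖dbar G z‖ₑ) ≤
        D + ENNReal.ofReal M * A + ENNReal.ofReal (16 * k * B) * (V + 1) * ENNReal.ofReal ε := by
      have pw : ∀ z, ‖dbar F z‖ₑ + ‖dbar G z‖ₑ ≤ ‖dbar Q z‖ₑ * W z + ENNReal.ofReal M * (‖Q z‖ₑ * W z)
          + (lowSet f g ρ).indicator (fun z => ENNReal.ofReal (16 * k * B) *
            (ENNReal.ofReal ε + ENNReal.ofReal ε⁻¹ * ENNReal.ofReal (X z))) z := by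
        intro z
        by_cases hz : z ∈ tsupport Q
        swap
        · rw [dbar_zero_of_notMem (fun h => hz (supp f h)), dbar_zero_of_notMem (fun h => hz (supp g h))]
          simp
        have hz1 := hQs1 hz
        by_cases hzK : z ∈ K
        · have hzK' := hzK
          rw [hK] at hzK'
          have hzero : ∀ u : ℂ → ℂ, dbar (fun w => Q w * (trunc f g ρ w : ℂ) * u w) z = 0 := by
            intro u
            have he : (fun w => Q w * (trunc f g ρ w : ℂ) * u w) =ᶠ[nhds z] fun _ => 0 := by
              filter_upwards [trunc_eventually_zero (ρ := ρ)
                (hf.continuousAt (isOpen_ball.mem_nhds hz1))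
                (hg.continuousAt (isOpen_ball.mem_nhds hz1)) hzK'.2.1 hzK'.2.2] with w hw
              simp [hw]
            unfold dbar
            rw [he.fderiv_eq]; simp
          rw [hF, hG, hzero f, hzero g]
          simp
        · have hzd : z ∈ ball (0:ℂ) 1 \ K := ⟨hz1, hzK⟩
          have hpos : 0 < ‖f z‖ + ‖g z‖ := by
            by_contra hcon
            have h1 : ‖f z‖ = 0 := by linarith [norm_nonneg (f z), norm_nonneg (g z)]
            have h2 : ‖g z‖ = 0 := by linarith [norm_nonneg (f z), norm_nonneg (g z)]
            apply hzK
            rw [hK]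
            exact ⟨hz1, norm_eq_zero.1 h1, norm_eq_zero.1 h2⟩
          have hz34 : ‖z‖ ≤ 3 / 4 := by
            have := hQs hz
            rw [mem_ball_zero_iff] at this
            linarith
          have hp := trunc_pointwise hρ hε hk hz34 hpos (hfs z hzd) (hgs z hzd)
            (hQ.differentiable (by norm_num) z) (hB z) (hsys z hzd) (hX z hzd)
          have hX0 : 0 ≤ X z := (sq_nonneg _).trans (hX z hzd)
          rw [hW, Set.indicator_of_mem hz1, ← ofReal_norm (dbar F z), ← ofReal_norm (dbar G z),
            ← ENNReal.ofReal_add (norm_nonneg _) (norm_nonneg _)]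
          refine (ENNReal.ofReal_le_ofReal hp).trans ?_
          rw [ENNReal.ofReal_add (by positivity)
            (Set.indicator_apply_nonneg fun _ => by positivity),
            ENNReal.ofReal_add (by positivity) (by positivity),
            ENNReal.ofReal_mul (norm_nonneg _), ENNReal.ofReal_mul hM,
            ENNReal.ofReal_mul (norm_nonneg _), ofReal_norm, ofReal_norm]
          gcongr
          by_cases hl : z ∈ lowSet f g ρ
          · rw [Set.indicator_of_mem hl, Set.indicator_of_mem hl, ENNReal.ofReal_mul (p := 16 * k * B) (by positivity),
              ENNReal.ofReal_add hε.le (by positivity), div_eq_inv_mul,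
              ENNReal.ofReal_mul (p := ε⁻¹) (by positivity)]
          · rw [Set.indicator_of_notMem hl]; simp
      rw [← lintegral_add_left (by fun_prop)]
      refine (lintegral_mono pw).trans ?_
      rw [lintegral_add_left (by fun_prop), lintegral_add_left (by fun_prop),
        lintegral_const_mul _ (by fun_prop)]
      gcongr
      refine (lintegral_indicator_le _ _).trans ?_
      rw [lintegral_const_mul' _ _ (by simp), mul_assoc (ENNReal.ofReal (16 * k * B))]
      gcongr
      rw [lintegral_add_left (by fun_prop), lintegral_const_mul' _ _ (by simp), setLIntegral_const,
        add_mul, one_mul]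
      refine add_le_add ?_ ?_
      · rw [mul_comm]
        gcongr
        refine measure_mono fun z hz => ?_
        rw [mem_closedBall_zero_iff]
        exact hz.1
      · refine (mul_le_mul_right hI' _).trans (le_of_eq ?_)
        rw [← ENNReal.ofReal_mul (by positivity)]
        congr 1
        field_simp
    calc A ≤ ((∫⁻ z, ‖F z‖ₑ) + (∫⁻ z, ‖G z‖ₑ)) + ENNReal.ofReal ε * ∫⁻ z, ‖Q z‖ₑ := lower
      _ ≤ (ENNReal.ofReal (4 * R) * (∫⁻ z, ‖dbar F z‖ₑ) + ENNReal.ofReal (4 * R) * (∫⁻ z, ‖dbar G z‖ₑ))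
          + ENNReal.ofReal ε * ∫⁻ z, ‖Q z‖ₑ := by gcongr
      _ ≤ ENNReal.ofReal (4 * R) * (D + ENNReal.ofReal M * A +
          ENNReal.ofReal (16 * k * B) * (V + 1) * ENNReal.ofReal ε)
          + ENNReal.ofReal ε * ∫⁻ z, ‖Q z‖ₑ := by
          rw [← mul_add]; gcongr
      _ = _ := by ring
  have half : ENNReal.ofReal (4 * R) * (ENNReal.ofReal M * A) ≤ A / 2 := by
    rw [← mul_assoc, ← ENNReal.ofReal_mul (by positivity), div_eq_mul_inv, mul_comm A]
    gcongr
    refine (ENNReal.ofReal_le_ofReal hRM).trans (le_of_eq ?_)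
    rw [one_div, ENNReal.ofReal_inv_of_pos (by norm_num)]
    simp
  have s2 : A / 2 + A / 2 ≤ ENNReal.ofReal (4 * R) * D + A / 2 := by
    rw [ENNReal.add_halves]
    refine step.trans ?_
    rw [mul_add]
    gcongr
  have s3 : A / 2 ≤ ENNReal.ofReal (4 * R) * D :=
    (ENNReal.add_le_add_iff_right (ENNReal.div_ne_top hAfin (by simp))).1 s2
  calc A = A / 2 + A / 2 := (ENNReal.add_halves _).symm
    _ ≤ ENNReal.ofReal (4 * R) * D + ENNReal.ofReal (4 * R) * D := add_le_add s3 s3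
    _ = _ := by
        rw [← add_mul, ← ENNReal.ofReal_add (by positivity) (by positivity)]
        congr 2; ring


lemma opNorm_le_C (L : ℂ →L[ℝ] ℂ) : ‖L‖ ≤ ‖L 1‖ + ‖L Complex.I‖ := by
  refine L.opNorm_le_bound (by positivity) fun x => ?_
  have hx : L x = (x.re : ℝ) • L 1 + (x.im : ℝ) • L Complex.I := by
    rw [← map_smul, ← map_smul, ← map_add]
    congr 1
    apply Complex.ext <;> simp
  rw [hx]
  refine (norm_add_le _ _).trans ?_
  rw [norm_smul, norm_smul, add_mul, mul_comm ‖L 1‖, mul_comm ‖L Complex.I‖]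
  gcongr
  · exact Complex.abs_re_le_norm x
  · exact Complex.abs_im_le_norm x

/-- The core analytic claim of Steps 1–5 of the proof of Lemma 8.10: if `0` is an
accumulation point of the common zero set `K` of a solution `(α, v)` of the first-order
system, then `(α, v)` vanishes identically on some annulus. -/
theorem vanishing_annulus (N₀ C C' γ : ℝ) (hN₀ : 0 < N₀) (hC : 0 ≤ C) (hC' : 0 ≤ C')
    (hγ : γ ∈ Set.Ioc (0:ℝ) 1)
    (α : ℂ → ℂ) (v : ℂ → ℝ) (τ₀ τ₁ : ℂ → ℂ) (K : Set ℂ)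
    (hK : K = {z : ℂ | z ∈ ball (0:ℂ) 1 ∧ α z = 0 ∧ v z = 0})
    (hαcont : ContinuousOn α (ball (0:ℂ) 1))
    (hvcont : ContinuousOn v (ball (0:ℂ) 1))
    (hτ₀ : ContinuousOn τ₀ (ball (0:ℂ) 1))
    (hτ₁ : ContinuousOn τ₁ (ball (0:ℂ) 1))
    (hτbound : ∀ z ∈ ball (0:ℂ) 1, ‖τ₀ z‖ + ‖τ₁ z‖ ≤ C * ‖z‖ ^ 2)
    (hαsmooth : ContDiffOn ℝ (⊤ : ℕ∞) α (ball (0:ℂ) 1 \ K))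
    (hvsmooth : ContDiffOn ℝ (⊤ : ℕ∞) v (ball (0:ℂ) 1 \ K))
    (hsys : ∀ z ∈ ball (0:ℂ) 1 \ K,
      wirtingerZ α z = -(1 / 2 : ℂ) * (1 + (N₀ : ℂ)) * (1 + τ₀ z) * (v z : ℂ) ∧
      wirtingerZbar v z = 2 * (N₀ : ℂ) * (1 + τ₁ z) * α z)
    (hHolder : ∀ z : ℂ, ‖z‖ ≤ 3 / 4 →
      ‖α z‖ + |v z| ≤ C' * Metric.infDist z K ^ γ)
    (hL2 : IntegrableOn (fun z => DsqC α z + DsqR v z) ({z : ℂ | ‖z‖ ≤ 3 / 4} \ K))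
    (hlim : Filter.Tendsto
      (fun ρ : ℝ => ∫ z in {z : ℂ | ‖z‖ ≤ 3 / 4 ∧ 0 < ‖α z‖ + |v z| ∧ ‖α z‖ + |v z| < ρ},
        (DsqC α z + DsqR v z))
      (nhdsWithin 0 (Set.Ioi 0)) (nhds 0))
    (hacc : (0:ℂ) ∈ closure (K \ {0})) :
    ∃ a b : ℝ, 0 < a ∧ a < b ∧ b ≤ 3 / 4 ∧
      ∀ z : ℂ, a ≤ ‖z‖ → ‖z‖ ≤ b → α z = 0 ∧ v z = 0 := by
  have hball : ∀ z : ℂ, ‖z‖ ≤ 3 / 4 → z ∈ ball (0:ℂ) 1 := fun z hz => by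
    rw [mem_ball_zero_iff]; linarith
  set f : ℂ → ℂ := fun z => Complex.conjCLE (α z) with hf
  set g : ℂ → ℂ := fun z => Complex.ofRealCLM (v z) with hg
  have nf : ∀ z, ‖f z‖ = ‖α z‖ := fun z => by simp [hf]
  have ng : ∀ z, ‖g z‖ = |v z| := fun z => by simp [hg]
  have hfc : ContinuousOn f (ball (0:ℂ) 1) := Complex.conjCLE.continuous.comp_continuousOn hαcont
  have hgc : ContinuousOn g (ball (0:ℂ) 1) := Complex.ofRealCLM.continuous.comp_continuousOn hvcont
  have hK' : K = {z : ℂ | z ∈ ball (0:ℂ) 1 ∧ f z = 0 ∧ g z = 0} := by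
    rw [hK]; ext z
    simp [hf, hg]
  have hopen : IsOpen (ball (0:ℂ) 1 \ K) := by
    have h1 : ContinuousOn (fun z => (α z, v z)) (ball (0:ℂ) 1) := hαcont.prodMk hvcont
    have h2 := h1.isOpen_inter_preimage isOpen_ball (isOpen_compl_singleton (x := ((0:ℂ), (0:ℝ))))
    convert h2 using 1
    rw [hK]; ext z
    simp only [Set.mem_diff, Set.mem_setOf_eq, Set.mem_inter_iff, Set.mem_preimage,
      Set.mem_compl_iff, Set.mem_singleton_iff, Prod.mk.injEq]
    tauto
  have hαs : ∀ z ∈ ball (0:ℂ) 1 \ K, ContDiffAt ℝ 1 α z := fun z hz =>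
    (hαsmooth.contDiffAt (hopen.mem_nhds hz)).of_le (by exact_mod_cast le_top)
  have hvs : ∀ z ∈ ball (0:ℂ) 1 \ K, ContDiffAt ℝ 1 v z := fun z hz =>
    (hvsmooth.contDiffAt (hopen.mem_nhds hz)).of_le (by exact_mod_cast le_top)
  have hfs : ∀ z ∈ ball (0:ℂ) 1 \ K, ContDiffAt ℝ 1 f z := fun z hz =>
    Complex.conjCLE.contDiff.contDiffAt.comp z (hαs z hz)
  have hgs : ∀ z ∈ ball (0:ℂ) 1 \ K, ContDiffAt ℝ 1 g z := fun z hz =>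
    Complex.ofRealCLM.contDiff.contDiffAt.comp z (hvs z hz)
  have dfv : ∀ z ∈ ball (0:ℂ) 1 \ K, ∀ w, fderiv ℝ f z w = starRingEnd ℂ (fderiv ℝ α z w) := by
    intro z hz w
    have h1 := ((hαs z hz).differentiableAt (by norm_num)).hasFDerivAt
    have h2 : HasFDerivAt f _ z :=
      (Complex.conjCLE : ℂ →L[ℝ] ℂ).hasFDerivAt.comp z h1
    rw [h2.fderiv]
    simp
  have dgv : ∀ z ∈ ball (0:ℂ) 1 \ K, ∀ w, fderiv ℝ g z w = ((fderiv ℝ v z w : ℝ) : ℂ) := by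
    intro z hz w
    have h1 := ((hvs z hz).differentiableAt (by norm_num)).hasFDerivAt
    have h2 : HasFDerivAt g _ z := Complex.ofRealCLM.hasFDerivAt.comp z h1
    rw [h2.fderiv]
    simp
  set M : ℝ := 2 * (1 + N₀) * (1 + C) with hMdef
  have hM : 0 < M := by positivity
  have hsys' : ∀ z ∈ ball (0:ℂ) 1 \ K, ‖dbar f z‖ + ‖dbar g z‖ ≤ M * (‖f z‖ + ‖g z‖) := by
    intro z hz
    obtain ⟨s1, s2⟩ := hsys z hz
    have e1 : dbar f z = starRingEnd ℂ (wirtingerZ α z) := by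
      unfold dbar wirtingerZ
      rw [dfv z hz, dfv z hz]
      simp only [map_mul, map_sub, map_div₀, map_one, Complex.conj_I, map_ofNat]
      ring
    have e2 : dbar g z = wirtingerZbar v z := by
      unfold dbar wirtingerZbar
      rw [dgv z hz, dgv z hz]
    have hzb := hz.1
    rw [mem_ball_zero_iff] at hzb
    have hC1 : C * ‖z‖ ^ 2 ≤ C := by
      have : ‖z‖ ^ 2 ≤ 1 := pow_le_one₀ (norm_nonneg _) hzb.le
      nlinarith
    have ht := hτbound z hz.1
    have t0 : ‖1 + τ₀ z‖ ≤ 1 + C := by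
      refine (norm_add_le _ _).trans ?_
      rw [norm_one]; linarith [norm_nonneg (τ₁ z)]
    have t1 : ‖1 + τ₁ z‖ ≤ 1 + C := by
      refine (norm_add_le _ _).trans ?_
      rw [norm_one]; linarith [norm_nonneg (τ₀ z)]
    have n1 : ‖(1 + (N₀:ℂ))‖ = 1 + N₀ := by
      rw [← Complex.ofReal_one, ← Complex.ofReal_add, Complex.norm_real, Real.norm_of_nonneg (by positivity)]
    have n2 : ‖(N₀:ℂ)‖ = N₀ := by
      rw [Complex.norm_real, Real.norm_of_nonneg hN₀.le]
    have b1 : ‖dbar f z‖ ≤ 1 / 2 * (1 + N₀) * (1 + C) * |v z| := by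
      rw [e1, RCLike.norm_conj, s1, norm_mul, norm_mul, norm_mul, n1, norm_neg, Complex.norm_real,
        Real.norm_eq_abs]
      have : ‖(1 / 2 : ℂ)‖ = 1 / 2 := by norm_num
      rw [this]
      gcongr
    have b2 : ‖dbar g z‖ ≤ 2 * N₀ * (1 + C) * ‖α z‖ := by
      rw [e2, s2, norm_mul, norm_mul, norm_mul, n2]
      have : ‖(2 : ℂ)‖ = 2 := by norm_num
      rw [this]
      gcongr
    rw [nf, ng, hMdef]
    have c1 : 0 ≤ (1 + N₀) * (1 + C) * |v z| := by positivity
    have c2 : 0 ≤ (1 + C) * ‖α z‖ := by positivity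
    nlinarith
  set X : ℂ → ℝ := fun z => 4 * (DsqC α z + DsqR v z) with hXdef
  have hX : ∀ z ∈ ball (0:ℂ) 1 \ K, (‖fderiv ℝ f z‖ + ‖fderiv ℝ g z‖) ^ 2 ≤ X z := by
    intro z hz
    have h1 := opNorm_le_C (fderiv ℝ f z)
    have h2 := opNorm_le_C (fderiv ℝ g z)
    rw [dfv z hz, dfv z hz, RCLike.norm_conj, RCLike.norm_conj] at h1
    rw [dgv z hz, dgv z hz, Complex.norm_real, Complex.norm_real] at h2
    simp only [hXdef, DsqC, DsqR]
    set a1 := ‖fderiv ℝ α z 1‖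
    set a2 := ‖fderiv ℝ α z Complex.I‖
    set b1 := ‖fderiv ℝ v z 1‖
    set b2 := ‖fderiv ℝ v z Complex.I‖
    calc _ ≤ (a1 + a2 + (b1 + b2)) ^ 2 := by gcongr
      _ ≤ _ := by
        nlinarith [sq_nonneg (a1 - a2), sq_nonneg (a1 - b1), sq_nonneg (a1 - b2),
          sq_nonneg (a2 - b1), sq_nonneg (a2 - b2), sq_nonneg (b1 - b2)]
  have hD0 : ∀ z, 0 ≤ DsqC α z + DsqR v z := fun z => by
    unfold DsqC DsqR; positivity
  have hlow : ∀ ε : ℝ, 0 < ε → ∃ ρ : ℝ, 0 < ρ ∧ ρ ≤ ε ∧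
      ∫⁻ z in lowSet f g ρ, ENNReal.ofReal (X z) ≤ ENNReal.ofReal ε := by
    intro ε hε
    have h1 := hlim.eventually (ge_mem_nhds (show (0:ℝ) < ε / 4 by positivity))
    have h2 : ∀ᶠ ρ in nhdsWithin (0:ℝ) (Set.Ioi 0), ρ ∈ Set.Ioc 0 ε :=
      Ioc_mem_nhdsGT hε
    obtain ⟨ρ, hρ1, hρ2⟩ := (h1.and h2).exists
    refine ⟨ρ, hρ2.1, hρ2.2, ?_⟩
    have hset : lowSet f g ρ =
        {z : ℂ | ‖z‖ ≤ 3 / 4 ∧ 0 < ‖α z‖ + |v z| ∧ ‖α z‖ + |v z| < ρ} := by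
      unfold lowSet
      simp only [nf, ng]
    rw [← hset] at hρ1
    have hsub : lowSet f g ρ ⊆ {z : ℂ | ‖z‖ ≤ 3 / 4} \ K := by
      intro z hz
      refine ⟨hz.1, fun hzK => ?_⟩
      rw [hK'] at hzK
      have := hz.2.1
      rw [hzK.2.1, hzK.2.2] at this
      simp at this
    have hIntg : IntegrableOn X (lowSet f g ρ) := (hL2.mono_set hsub).const_mul 4
    rw [← ofReal_integral_eq_lintegral_ofReal hIntg
      (Eventually.of_forall fun z => mul_nonneg (by norm_num) (hD0 z))]
    apply ENNReal.ofReal_le_ofReal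
    simp only [hXdef]
    rw [integral_const_mul]
    linarith
  set R : ℝ := min (1 / 2) (1 / (8 * M)) with hRdef
  have hR : 0 < R := by positivity
  have hR2 : R ≤ 1 / 2 := min_le_left _ _
  have hRM : 4 * R * M ≤ 1 / 2 := by
    have : R ≤ 1 / (8 * M) := min_le_right _ _
    rw [le_div_iff₀ (by positivity)] at this
    linarith
  have hcarl := carl_of_system hK' hfc hgc hfs hgs hM.le hsys' hX hlow hR (by linarith) hRM
  set W := (ball (0:ℂ) 1).indicator (fun z => ENNReal.ofReal (‖f z‖ + ‖g z‖)) with hW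
  have hcont : ContinuousOn (fun z => ‖f z‖ + ‖g z‖) (ball (0:ℂ) 1) := hfc.norm.add hgc.norm
  have hWc : ContinuousOn (fun z => ENNReal.ofReal (‖f z‖ + ‖g z‖)) (ball (0:ℂ) 1) :=
    ENNReal.continuous_ofReal.comp_continuousOn hcont
  have hWc' : ContinuousOn W (ball (0:ℂ) 1) :=
    hWc.congr fun z hz => by rw [hW, Set.indicator_of_mem hz]
  have hWm : Measurable W := by
    classical
    have := hWc.measurable_piecewise (g := fun _ => (0:ENNReal)) continuousOn_const measurableSet_ball
    rw [hW, ← Set.piecewise_eq_indicator]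
    exact this
  have hsubR : closedBall (0:ℂ) R ⊆ ball (0:ℂ) 1 := closedBall_subset_ball (by linarith)
  have hbd : ∃ B : ℝ, ∀ z ∈ ball (0:ℂ) R, W z ≤ ENNReal.ofReal B := by
    obtain ⟨B, hB⟩ := (isCompact_closedBall (0:ℂ) R).exists_bound_of_continuousOn (hcont.mono hsubR)
    refine ⟨B, fun z hz => ?_⟩
    have hz' := ball_subset_closedBall hz
    rw [hW, Set.indicator_of_mem (hsubR hz')]
    exact ENNReal.ofReal_le_ofReal ((Real.le_norm_self _).trans (hB z hz'))
  have hinfK : (K ∩ ball (0:ℂ) (R / 8)).Infinite := by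
    intro hfinite
    have h1 : ((K \ {0}) ∩ ball (0:ℂ) (R / 8)).Finite :=
      hfinite.subset (Set.inter_subset_inter_left _ Set.diff_subset)
    have h2 := isOpen_ball.closure_inter
      (show (0:ℂ) ∈ closure (K \ {0}) ∩ ball (0:ℂ) (R / 8) from
        ⟨hacc, mem_ball_self (by positivity)⟩)
    rw [h1.isClosed.closure_eq] at h2
    exact h2.1.2 rfl
  have hinf : ∀ N : ℕ, ∃ S : Finset ℂ, S.card = N ∧ ∀ p ∈ S, ‖p‖ < R / 8 ∧
      Tendsto W (nhds p) (nhds 0) := by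
    intro N
    obtain ⟨S, hS, hN⟩ := hinfK.exists_subset_card_eq N
    refine ⟨S, hN, fun p hp => ?_⟩
    have hp' := hS hp
    have hpK := hp'.1
    rw [hK'] at hpK
    refine ⟨mem_ball_zero_iff.1 hp'.2, ?_⟩
    have h := hWc'.continuousAt (isOpen_ball.mem_nhds hpK.1)
    have h0 : W p = 0 := by
      rw [hW, Set.indicator_of_mem hpK.1, hpK.2.1, hpK.2.2]; simp
    rw [← h0]
    exact h
  have hfin := carl_final hR (by finiteness) hWm hcarl hbd hinf
  have hzero : ∀ z ∈ ball (0:ℂ) (R / 8), W z = 0 := by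
    rw [lintegral_eq_zero_iff hWm] at hfin
    have hsub : ball (0:ℂ) (R / 8) ⊆ ball (0:ℂ) 1 := ball_subset_ball (by linarith)
    have := Measure.eqOn_open_of_ae_eq hfin isOpen_ball (hWc'.mono hsub) continuousOn_const
    exact this
  refine ⟨R / 16, R / 10, by positivity, by linarith, by linarith, fun z _ hz => ?_⟩
  have hzb : z ∈ ball (0:ℂ) (R / 8) := by
    rw [mem_ball_zero_iff]; linarith
  have h := hzero z hzb
  rw [hW, Set.indicator_of_mem (ball_subset_ball (by linarith) hzb), ENNReal.ofReal_eq_zero, nf, ng] at h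
  constructor
  · exact norm_le_zero_iff.1 (by linarith [norm_nonneg (α z), abs_nonneg (v z)])
  · exact abs_nonpos_iff.1 (by linarith [norm_nonneg (α z), abs_nonneg (v z)])
end
end
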